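/- arXiv:1611.07380 — 10 statements merged into one kernel-verified Lean document; each statement's English description precedes it below -/
import Mathlib

section
/- Let W be a closure space, let μ be an infinite cardinal, and let A be a subset of the underlying set of W with |A| < μ. If W is μ-homogeneous, then the localization W_A is μ-homogeneous. -/
open Cardinal Set

universe u v

variable {X : Type u}

/-- `cl` is a closure operator: monotonicity and transitivity. -/
def IsClosure (cl : Set X → Set X) : Prop :=
  (∀ A : Set X, A ⊆ cl A) ∧ ∀ A B : Set X, A ⊆ cl B → cl A ⊆ cl B

/-- `f` is an automorphism of the closure space `(X, cl)`. -/
def IsAuto (cl : Set X → Set X) (f : X → X) : Prop :=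
  Function.Bijective f ∧ ∀ A : Set X, f '' cl A = cl (f '' A)

/-- The closure space `(X, cl)` is `μ`-homogeneous. -/
def IsHomog (cl : Set X → Set X) (μ : Cardinal.{u}) : Prop :=
  ∀ A : Set X, #A < μ → ∀ a b : X, a ∉ cl A → b ∉ cl A →
    ∃ f : X → X, IsAuto cl f ∧ (∀ x ∈ A, f x = x) ∧ f a = b

/-- The closure space `(X, cl)` has exchange over `A`. -/
def ExchOver (cl : Set X → Set X) (A : Set X) : Prop :=
  ∀ a b : X, a ∈ cl (A ∪ {b}) → a ∉ cl A → b ∈ cl (A ∪ {a})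

/-- The localization `W_A`: the closure space on `X \ A` with
`cl^{W_A}(B) = cl(A ∪ B) ∩ (X \ A)`. -/
def locCl (cl : Set X → Set X) (A : Set X) :
    Set {x : X // x ∉ A} → Set {x : X // x ∉ A} :=
  fun B => {x | (x : X) ∈ cl (A ∪ (Subtype.val '' B))}

/-- `κ(W)`: the least infinite cardinal `κ` such that whenever `a ∈ cl A` there is
`A₀ ⊆ A` with `|A₀| < κ` and `a ∈ cl A₀`. -/
noncomputable def kappaCard (cl : Set X → Set X) : Cardinal.{u} :=
  sInf {κ : Cardinal.{u} | ℵ₀ ≤ κ ∧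
    ∀ (A : Set X) (a : X), a ∈ cl A → ∃ A₀, A₀ ⊆ A ∧ #A₀ < κ ∧ a ∈ cl A₀}

/-- `LS(W)`: the least infinite cardinal `μ` such that `|cl A| ≤ |A| + μ` for all `A`. -/
noncomputable def LSCard (cl : Set X → Set X) : Cardinal.{u} :=
  sInf {μ : Cardinal.{u} | ℵ₀ ≤ μ ∧ ∀ A : Set X, #(cl A) ≤ #A + μ}

/-- If `W` is `μ`-homogeneous (`μ` infinite) and `|A| < μ`, then the localization
`W_A` is `μ`-homogeneous. -/
theorem stmt0 (cl : Set X → Set X) (hcl : IsClosure cl) (μ : Cardinal.{u})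
    (hμ : ℵ₀ ≤ μ) (A : Set X) (hA : #A < μ) (hhom : IsHomog cl μ) :
    IsHomog (locCl cl A) μ := by
  intro B hB a b ha hb
  have hcard : #(A ∪ Subtype.val '' B : Set X) < μ :=
    (Cardinal.mk_union_le _ _).trans_lt
      (Cardinal.add_lt_of_lt hμ hA (Cardinal.mk_image_le.trans_lt hB))
  obtain ⟨f, ⟨⟨hinj, hsurj⟩, hf⟩, hfix, hab⟩ := hhom _ hcard a.1 b.1 ha hb
  have hfA : ∀ x ∈ A, f x = x := fun x hx => hfix x (Or.inl hx)
  have hmem : ∀ x, x ∉ A → f x ∉ A := by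
    intro x hx h
    have h2 := hinj (hfA _ h)
    rw [h2] at h
    exact hx h
  have himg : f '' A = A := by
    ext x
    constructor
    · rintro ⟨y, hy, rfl⟩
      rw [hfA y hy]; exact hy
    · intro hx
      exact ⟨x, hx, hfA x hx⟩
  let g : {x : X // x ∉ A} → {x : X // x ∉ A} := fun x => ⟨f x.1, hmem x.1 x.2⟩
  have hgs : Function.Surjective g := by
    rintro ⟨y, hy⟩
    obtain ⟨x, rfl⟩ := hsurj y
    exact ⟨⟨x, fun h => hy (by rw [hfA x h]; exact h)⟩, rfl⟩
  have hgi : Function.Injective g := by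
    intro x y h
    exact Subtype.ext (hinj (congrArg Subtype.val h))
  refine ⟨g, ⟨⟨hgi, hgs⟩, ?_⟩, ?_, Subtype.ext hab⟩
  · intro C
    have hC : f '' (A ∪ Subtype.val '' C) = A ∪ Subtype.val '' (g '' C) := by
      rw [Set.image_union, himg, Set.image_image, Set.image_image]
    ext y
    obtain ⟨x, rfl⟩ := hgs y
    rw [hgi.mem_set_image]
    change x.1 ∈ cl (A ∪ Subtype.val '' C) ↔ f x.1 ∈ cl (A ∪ Subtype.val '' (g '' C))
    rw [← hC, ← hf, hinj.mem_set_image]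
  · intro x hx
    exact Subtype.ext (hfix x.1 (Or.inr ⟨x, hx, rfl⟩))
end

section
/- Let W be a closure space. Then W has exchange (over every subset of its underlying set) if and only if W has exchange over every subset A of its underlying set with |A| < κ(W). -/
open Cardinal Set

universe u v

variable {X : Type u}

/-- `W` has exchange (over every subset) iff it has exchange over every `A`
with `|A| < κ(W)`. -/
theorem stmt2 (cl : Set X → Set X) (hcl : IsClosure cl) :
    (∀ A : Set X, ExchOver cl A) ↔
      ∀ A : Set X, #A < kappaCard cl → ExchOver cl A := by
  refine ⟨fun h A _ => h A, fun h A a b hab ha => ?_⟩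
  have mono : ∀ {S T : Set X}, S ⊆ T → cl S ⊆ cl T := fun {S T} hST =>
    hcl.2 S T (hST.trans (hcl.1 T))
  have hne : {κ : Cardinal.{u} | ℵ₀ ≤ κ ∧
      ∀ (A : Set X) (a : X), a ∈ cl A → ∃ A₀, A₀ ⊆ A ∧ #A₀ < κ ∧ a ∈ cl A₀}.Nonempty := by
    refine ⟨Order.succ (max ℵ₀ #X), (le_max_left _ _).trans (Order.le_succ _), fun A a ha => ?_⟩
    exact ⟨A, Subset.rfl, Order.lt_succ_of_le ((mk_set_le A).trans (le_max_right _ _)), ha⟩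
  obtain ⟨A₀, hA₀, hc, ha₀⟩ := (csInf_mem hne).2 _ _ hab
  have hsub : A₀ \ {b} ⊆ A := by
    rintro x ⟨hx, hxb⟩
    exact (hA₀ hx).resolve_right hxb
  have hb := h (A₀ \ {b}) ((mk_le_mk_of_subset sdiff_subset).trans_lt hc) a b
    (mono (by intro x hx; by_cases hxb : x = b <;> simp [hx, hxb]) ha₀)
    (fun hx => ha (mono hsub hx))
  exact mono (union_subset_union_left _ hsub) hb
end

section
/- Let W be an ℵ₀-homogeneous closure space in which the empty set is closed, and suppose W fails exchange over the empty set. Then the preorder ≤ on W given by a ≤ b iff a ∈ cl({b}) is a dense linear preorder without endpoints: for all a, b either a ≤ b or b ≤ a; for all a < b there exists c with a < c < b; and for every a there exist b and c with b < a < c. -/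
open Cardinal Set

universe u v

variable {X : Type u}

theorem IsAuto.mem_iff' {cl : Set X → Set X} {f : X → X} (hf : IsAuto cl f) (x y : X) :
    f x ∈ cl {f y} ↔ x ∈ cl {y} := by
  have h := hf.2 {y}
  rw [Set.image_singleton] at h
  rw [← h]
  exact hf.1.1.mem_set_image

/-- If `W` is `ℵ₀`-homogeneous, `∅` is closed, and exchange over `∅` fails, then
the preorder `a ≤ b ↔ a ∈ cl {b}` is a dense linear preorder without endpoints. -/
theorem stmt6 (cl : Set X → Set X) (hcl : IsClosure cl) (hhom : IsHomog cl ℵ₀)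
    (hempty : cl ∅ = ∅) (hfail : ¬ ExchOver cl ∅) :
    (∀ a b : X, a ∈ cl {b} ∨ b ∈ cl {a}) ∧
    (∀ a b : X, (a ∈ cl {b} ∧ b ∉ cl {a}) →
      ∃ c : X, (a ∈ cl {c} ∧ c ∉ cl {a}) ∧ (c ∈ cl {b} ∧ b ∉ cl {c})) ∧
    (∀ a : X, ∃ b c : X,
      (b ∈ cl {a} ∧ a ∉ cl {b}) ∧ (a ∈ cl {c} ∧ c ∉ cl {a})) := by
  have hE : ∀ a b : X, ∃ f : X → X, IsAuto cl f ∧ f a = b := by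
    intro a b
    obtain ⟨f, hf, -, h⟩ := hhom ∅ (by simp [Cardinal.aleph0_pos]) a b (by simp [hempty]) (by simp [hempty])
    exact ⟨f, hf, h⟩
  have hS : ∀ d a b : X, a ∉ cl {d} → b ∉ cl {d} →
      ∃ f : X → X, IsAuto cl f ∧ f d = d ∧ f a = b := by
    intro d a b ha hb
    obtain ⟨f, hf, h1, h⟩ := hhom {d} (by simp) a b ha hb
    exact ⟨f, hf, h1 d rfl, h⟩
  have htr : ∀ a b c : X, a ∈ cl {b} → b ∈ cl {c} → a ∈ cl {c} := by
    intro a b c hab hbc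
    exact hcl.2 {b} {c} (by simpa using hbc) hab
  obtain ⟨p, q, hpq, hqp⟩ : ∃ p q : X, p ∈ cl {q} ∧ q ∉ cl {p} := by
    by_contra hne
    push Not at hne
    apply hfail
    intro a b h _
    simpa using hne a b (by simpa using h)
  have hlow : ∀ a : X, ∃ b, b ∈ cl {a} ∧ a ∉ cl {b} := by
    intro a
    obtain ⟨f, hf, rfl⟩ := hE q a
    exact ⟨f p, (hf.mem_iff' _ _).2 hpq, fun h => hqp ((hf.mem_iff' _ _).1 h)⟩
  have hup : ∀ a : X, ∃ c, a ∈ cl {c} ∧ c ∉ cl {a} := by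
    intro a
    obtain ⟨f, hf, rfl⟩ := hE p a
    exact ⟨f q, (hf.mem_iff' _ _).2 hpq, fun h => hqp ((hf.mem_iff' _ _).1 h)⟩
  refine ⟨?_, ?_, ?_⟩
  · intro a b
    by_cases hb : b ∈ cl {a}
    · exact Or.inr hb
    · left
      obtain ⟨c, hac, hca⟩ := hup a
      obtain ⟨f, hf, hfa, hfc⟩ := hS a c b hca hb
      have := (hf.mem_iff' a c).2 hac
      rwa [hfa, hfc] at this
  · rintro a b ⟨hab, hba⟩
    obtain ⟨c, hbc, hcb⟩ := hup b
    have hca : c ∉ cl {a} := fun h => hcb (htr _ _ _ h hab)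
    obtain ⟨f, hf, hfa, hfc⟩ := hS a c b hca hba
    have h1 := hf.mem_iff' a b
    have h2 := hf.mem_iff' b a
    have h3 := hf.mem_iff' b c
    have h4 := hf.mem_iff' c b
    rw [hfa] at h1 h2
    rw [hfc] at h3 h4
    exact ⟨f b, ⟨h1.2 hab, fun h => hba (h2.1 h)⟩, h3.2 hbc, fun h => hcb (h4.1 h)⟩
  · intro a
    obtain ⟨b, hb⟩ := hlow a
    obtain ⟨c, hc⟩ := hup a
    exact ⟨b, c, hb, hc⟩
end

section
/- Let W be an ℵ₀-homogeneous closure space in which the empty set is closed. If the underlying set of W is finite, then W has exchange over the empty set. -/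
open Cardinal Set

universe u v

variable {X : Type u}

/-- An `ℵ₀`-homogeneous closure space with `∅` closed and finite underlying set
has exchange over `∅`. -/
theorem stmt7 (cl : Set X → Set X) (hcl : IsClosure cl) (hhom : IsHomog cl ℵ₀)
    (hempty : cl ∅ = ∅) (hfin : Finite X) :
    ExchOver cl ∅ := by
  intro a b hab _
  rw [Set.empty_union] at *
  obtain ⟨f, ⟨hbij, hf⟩, -, hfa⟩ := hhom ∅ (by simpa using Cardinal.aleph0_pos) a b (by simp [hempty]) (by simp [hempty])
  have h1 : f '' cl {a} = cl {b} := by rw [hf, Set.image_singleton, hfa]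
  have h2 : cl {a} ⊆ cl {b} := hcl.2 _ _ (Set.singleton_subset_iff.2 hab)
  have h3 : (cl {b}).ncard = (cl {a}).ncard := by
    rw [← h1, Set.ncard_image_of_injective _ hbij.1]
  have h4 : cl {a} = cl {b} := Set.eq_of_subset_of_ncard_le h2 h3.le (Set.toFinite _)
  rw [h4]
  exact hcl.1 _ rfl
end

section
/- Let W be an ℵ₀-homogeneous closure space in which the empty set is closed. If the cardinality of the underlying set of W is at least LS(W)⁺⁺ (the double successor of LS(W)), then W has exchange over the empty set. -/
open Cardinal Set

universe u v

variable {X : Type u}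

/-- An `ℵ₀`-homogeneous closure space with `∅` closed and of cardinality at least
`LS(W)⁺⁺` has exchange over `∅`. -/
theorem stmt8 (cl : Set X → Set X) (hcl : IsClosure cl) (hhom : IsHomog cl ℵ₀)
    (hempty : cl ∅ = ∅)
    (hcard : Order.succ (Order.succ (LSCard cl)) ≤ #X) :
    ExchOver cl ∅ := by
  by_contra hne
  unfold ExchOver at hne
  push Not at hne
  obtain ⟨a, b, hab, -, hba⟩ := hne
  simp only [empty_union] at hab hba
  obtain ⟨hsub, htr⟩ := hcl
  have hmono : ∀ A B : Set X, A ⊆ B → cl A ⊆ cl B := fun A B h => htr A B (h.trans (hsub B))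
  -- every point `x` lies below every `y` outside its closure
  have key : ∀ x y : X, y ∉ cl {x} → x ∈ cl {y} := by
    intro x y hy
    obtain ⟨f, hf, -, hfa⟩ := hhom ∅ (by simp [aleph0_pos]) a x (by simp [hempty]) (by simp [hempty])
    have h1 : x ∈ cl {f b} := by
      have : f a ∈ f '' cl {b} := mem_image_of_mem f hab
      rw [hf.2, image_singleton, hfa] at this
      exact this
    have h2 : f b ∉ cl {x} := by
      intro h
      have h3 : f b ∈ f '' cl {a} := by
        rw [hf.2, image_singleton, hfa]; exact h
      exact hba ((hf.1.1.mem_set_image).1 h3)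
    obtain ⟨g, hg, hgx, hgb⟩ := hhom {x} (by simp) (f b) y h2 hy
    have : g x ∈ g '' cl {f b} := mem_image_of_mem g h1
    rw [hg.2, image_singleton, hgb, hgx x rfl] at this
    exact this
  have hLS : LSCard cl ∈ {μ : Cardinal.{u} | ℵ₀ ≤ μ ∧ ∀ A : Set X, #(cl A) ≤ #A + μ} := by
    apply csInf_mem
    refine ⟨max ℵ₀ #X, le_max_left _ _, fun A => ?_⟩
    exact (mk_set_le _).trans ((le_max_right _ _).trans (self_le_add_left _ _))
  obtain ⟨hinf, hbd⟩ := hLS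
  generalize LSCard cl = l at *
  obtain ⟨S, hS⟩ := le_mk_iff_exists_set.1 ((Order.le_succ (Order.succ l)).trans hcard)
  have hlt : #(cl S) < #X := by
    refine lt_of_le_of_lt (hbd S) (lt_of_lt_of_le ?_ hcard)
    rw [hS, add_eq_left (hinf.trans (Order.le_succ l)) (Order.le_succ l)]
    exact Order.lt_succ _
  obtain ⟨y, hy⟩ : ∃ y, y ∉ cl S := by
    by_contra! h
    rw [eq_univ_of_forall h, mk_univ] at hlt
    exact lt_irrefl _ hlt
  have hSy : S ⊆ cl {y} := fun s hs =>
    key s y fun h => hy (hmono _ _ (singleton_subset_iff.2 hs) h)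
  have h1 : #S ≤ l := by
    refine (mk_le_mk_of_subset hSy).trans ((hbd {y}).trans ?_)
    rw [mk_singleton, add_eq_right hinf (one_le_aleph0.trans hinf)]
  rw [hS] at h1
  exact absurd h1 (not_le.2 (Order.lt_succ l))
end

section
/- Let W be a closure space in which the empty set is closed and which has finite character (κ(W) = ℵ₀). Suppose the relation a ≤ b defined by a ∈ cl({b}) is total, i.e., for all a, b in W either a ∈ cl({b}) or b ∈ cl({a}). Then for every nonempty family ⟨A_i : i ∈ I⟩ of subsets of the underlying set of W, cl(⋃_{i ∈ I} A_i) = ⋃_{i ∈ I} cl(A_i). -/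
open Cardinal Set

universe u v

variable {X : Type u}

/-- In a closure space with `∅` closed, finite character, and a total relation
`a ∈ cl {b} ∨ b ∈ cl {a}`, closure commutes with nonempty unions. -/
theorem stmt11 (cl : Set X → Set X) (hcl : IsClosure cl) (hempty : cl ∅ = ∅)
    (hκ : kappaCard cl = ℵ₀)
    (htotal : ∀ a b : X, a ∈ cl {b} ∨ b ∈ cl {a})
    {ι : Type v} [Nonempty ι] (A : ι → Set X) :
    cl (⋃ i, A i) = ⋃ i, cl (A i) := by
  obtain ⟨h1, h2⟩ := hcl
  have hne : {κ : Cardinal.{u} | ℵ₀ ≤ κ ∧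
      ∀ (A : Set X) (a : X), a ∈ cl A → ∃ A₀, A₀ ⊆ A ∧ #A₀ < κ ∧ a ∈ cl A₀}.Nonempty := by
    rw [Set.nonempty_iff_ne_empty]
    intro h
    unfold kappaCard at hκ
    rw [h, Cardinal.sInf_empty] at hκ
    exact Cardinal.aleph0_ne_zero hκ.symm
  have hmem := csInf_mem hne
  change kappaCard cl ∈ _ at hmem
  rw [hκ] at hmem
  have hmax : ∀ F : Set X, F.Finite → F.Nonempty → ∃ m ∈ F, F ⊆ cl {m} := by
    intro F hF
    induction F, hF using Set.Finite.induction_on with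
    | empty => intro h; exact absurd h Set.not_nonempty_empty
    | @insert a s _ _ ih =>
      intro _
      rcases s.eq_empty_or_nonempty with rfl | hs
      · refine ⟨a, Set.mem_insert _ _, ?_⟩
        rw [insert_empty_eq]
        exact h1 _
      · obtain ⟨m, hm, hsm⟩ := ih hs
        rcases htotal a m with h | h
        · exact ⟨m, Set.mem_insert_of_mem _ hm, Set.insert_subset h hsm⟩
        · refine ⟨a, Set.mem_insert _ _, Set.insert_subset (h1 _ rfl) ?_⟩
          exact hsm.trans (h2 _ _ (Set.singleton_subset_iff.2 h))
  apply Set.Subset.antisymm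
  · intro a ha
    obtain ⟨F, hFA, hF, haF⟩ := hmem.2 _ _ ha
    have hfin : F.Finite := Cardinal.lt_aleph0_iff_set_finite.1 hF
    have hFne : F.Nonempty := by
      rw [Set.nonempty_iff_ne_empty]
      rintro rfl
      rw [hempty] at haF
      exact haF
    obtain ⟨m, hm, hFm⟩ := hmax F hfin hFne
    obtain ⟨i, hi⟩ := Set.mem_iUnion.1 (hFA hm)
    refine Set.mem_iUnion.2 ⟨i, ?_⟩
    exact h2 _ _ (Set.singleton_subset_iff.2 (h1 _ hi)) (h2 _ _ hFm haF)
  · exact Set.iUnion_subset fun i => h2 _ _ ((Set.subset_iUnion A i).trans (h1 _))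
end

section
/- There exists a closure space W of cardinality ℵ₁ such that W is ℵ₁-homogeneous, the empty set is closed in W, LS(W) = ℵ₀, κ(W) = ℵ₁, and W fails exchange over the empty set. (For example, the closure space on ℚ × ω₁ with the reverse lexicographic order, where cl₂(A) consists of the downward closure of A together with all b all of whose strict predecessors lie in the downward closure of A.) -/
open Cardinal Set

universe u v

variable {X : Type u}

namespace St14

section
variable {Y : Type} [LinearOrder Y]

def C (A : Set Y) : Set Y := {b | ∀ y < b, ∃ a ∈ A, y ≤ a}

lemma isClosure [DenselyOrdered Y] : IsClosure (C (Y := Y)) := by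
  refine ⟨fun A a ha y hy => ⟨a, ha, hy.le⟩, fun A B h b hb y hy => ?_⟩
  obtain ⟨z, hyz, hzb⟩ := exists_between hy
  obtain ⟨a, ha, hza⟩ := hb z hzb
  exact h ha y (hyz.trans_le hza)

lemma C_lower {A : Set Y} {x y : Y} (hx : x ∈ C A) (h : y ≤ x) : y ∈ C A :=
  fun z hz => hx z (hz.trans_le h)

lemma C_empty [NoMinOrder Y] : C (∅ : Set Y) = ∅ := by
  ext x
  simp only [C, mem_setOf_eq, mem_empty_iff_false, iff_false]
  intro h
  obtain ⟨y, hy⟩ := exists_lt x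
  simpa using h y hy

lemma isAuto_orderIso (f : Y ≃o Y) : IsAuto C f := by
  refine ⟨f.bijective, fun A => ?_⟩
  ext x
  constructor
  · rintro ⟨b, hb, rfl⟩ y hy
    obtain ⟨a, ha, hya⟩ := hb (f.symm y) (by rwa [f.symm_apply_lt])
    exact ⟨f a, mem_image_of_mem _ ha, by rwa [← f.symm_apply_le]⟩
  · intro h
    refine ⟨f.symm x, fun y hy => ?_, by simp⟩
    obtain ⟨_, ⟨a, ha, rfl⟩, hya⟩ := h (f y) (by rwa [← f.lt_symm_apply])
    exact ⟨a, ha, by simpa using hya⟩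

open Classical in
lemma extend (U : Set Y) (hU : U.OrdConnected) (s : U ≃o U) :
    ∃ f : Y ≃o Y, (∀ x ∉ U, f x = x) ∧ ∀ x : U, f x = s x := by
  let f : Y → Y := fun x => if h : x ∈ U then s ⟨x, h⟩ else x
  have f1 : ∀ x : U, f x = s x := fun x => by simp [f]
  have f2 : ∀ x ∉ U, f x = x := fun x hx => by simp [f, hx]
  have hm : StrictMono f := by
    intro x y hxy
    by_cases hx : x ∈ U <;> by_cases hy : y ∈ U
    · rw [f1 ⟨x, hx⟩, f1 ⟨y, hy⟩]
      exact s.strictMono (show (⟨x, hx⟩ : U) < ⟨y, hy⟩ from hxy)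
    · rw [f1 ⟨x, hx⟩, f2 y hy]
      by_contra! h
      exact hy (hU.out hx (s ⟨x, hx⟩).2 ⟨hxy.le, h⟩)
    · rw [f1 ⟨y, hy⟩, f2 x hx]
      by_contra! h
      exact hx (hU.out (s ⟨y, hy⟩).2 hy ⟨h, hxy.le⟩)
    · rwa [f2 x hx, f2 y hy]
  have hs : Function.Surjective f := by
    intro y
    by_cases hy : y ∈ U
    · exact ⟨s.symm ⟨y, hy⟩, by rw [f1]; simp⟩
    · exact ⟨y, f2 y hy⟩
  exact ⟨hm.orderIsoOfSurjective f hs, f2, f1⟩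

lemma isHomog [DenselyOrdered Y] [NoMinOrder Y] [NoMaxOrder Y]
    (hc : ∀ x : Y, (Iio x).Countable) : IsHomog (C (Y := Y)) (Cardinal.aleph 1) := by
  intro A _ a b ha hb
  obtain ⟨c, hc'⟩ := exists_gt (max a b)
  let U : Set Y := {x | x ∉ C A ∧ x < c}
  have haU : a ∈ U := ⟨ha, (le_max_left _ _).trans_lt hc'⟩
  have hbU : b ∈ U := ⟨hb, (le_max_right _ _).trans_lt hc'⟩
  have hU : U.OrdConnected := ⟨fun x hx y hy z hz =>
    ⟨fun h => hx.1 (C_lower h hz.1), hz.2.trans_lt hy.2⟩⟩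
  have : Countable U := ((hc c).mono fun x hx => hx.2).to_subtype
  have : Nonempty U := ⟨⟨a, haU⟩⟩
  have : DenselyOrdered U := inferInstance
  have : NoMaxOrder U := ⟨fun x => by
    obtain ⟨z, h1, h2⟩ := exists_between x.2.2
    exact ⟨⟨z, fun h => x.2.1 (C_lower h h1.le), h2⟩, h1⟩⟩
  have : NoMinOrder U := ⟨fun x => by
    by_contra! h
    apply x.2.1
    intro y hy
    obtain ⟨z, h1, h2⟩ := exists_between hy
    by_cases hz : z ∈ C A
    · exact hz y h1
    · exact absurd h2 (not_lt.2 (h ⟨z, hz, h2.trans x.2.2⟩))⟩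
  obtain ⟨e⟩ := Order.iso_of_countable_dense U ℚ
  obtain ⟨f, f2, f1⟩ := extend U hU
    ((e.trans (OrderIso.addRight (e ⟨b, hbU⟩ - e ⟨a, haU⟩))).trans e.symm)
  refine ⟨f, isAuto_orderIso f, fun x hx => f2 x fun h => h.1 (isClosure.1 A hx), ?_⟩
  have := f1 ⟨a, haU⟩
  simpa using this

lemma C_countable (hc : ∀ x : Y, (Iio x).Countable) {A : Set Y} (hA : A.Countable) :
    (C A).Countable := by
  have h1 : C A ⊆ (⋃ a ∈ A, (Iio a ∪ {a})) ∪ {x | x ∈ C A ∧ ∀ a ∈ A, a < x} := by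
    intro x hx
    by_cases h : ∀ a ∈ A, a < x
    · exact Or.inr ⟨hx, h⟩
    · push Not at h
      obtain ⟨a, ha, hxa⟩ := h
      left
      simp only [mem_iUnion]
      exact ⟨a, ha, hxa.lt_or_eq⟩
  refine Countable.mono h1 (Countable.union (hA.biUnion fun a _ => (hc a).union
    (countable_singleton a)) (Set.Subsingleton.countable ?_))
  have key : ∀ x y : Y, x ∈ {x | x ∈ C A ∧ ∀ a ∈ A, a < x} →
      y ∈ {x | x ∈ C A ∧ ∀ a ∈ A, a < x} → ¬ x < y := by
    intro x y hx hy h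
    obtain ⟨a, ha, h'⟩ := hy.1 x h
    exact absurd (hx.2 a ha) (not_lt.2 h')
  intro x hx y hy
  exact le_antisymm (not_lt.1 (key y x hy hx)) (not_lt.1 (key x y hx hy))

lemma ls (hc : ∀ x : Y, (Iio x).Countable) (hY : #Y = Cardinal.aleph 1) :
    LSCard (C (Y := Y)) = ℵ₀ := by
  apply le_antisymm
  · refine csInf_le' ⟨le_rfl, fun A => ?_⟩
    by_cases hA : A.Countable
    · exact (C_countable hc hA).le_aleph0.trans (self_le_add_left _ _)
    · rw [countable_iff_lt_aleph_one, not_lt] at hA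
      exact ((mk_set_le _).trans (hY.le.trans hA)).trans (self_le_add_right _ _)
  · exact le_csInf ⟨#Y, by rw [hY]; exact aleph0_le_aleph 1,
      fun A => (mk_set_le _).trans (self_le_add_left _ _)⟩ fun κ h => h.1

lemma kap [DenselyOrdered Y] [NoMinOrder Y] [Nonempty Y] (hc : ∀ x : Y, (Iio x).Countable) :
    kappaCard (C (Y := Y)) = Cardinal.aleph 1 := by
  have mem : Cardinal.aleph 1 ∈ {κ : Cardinal | ℵ₀ ≤ κ ∧
    ∀ (A : Set Y) (a : Y), a ∈ C A → ∃ A₀, A₀ ⊆ A ∧ #A₀ < κ ∧ a ∈ C A₀} := by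
    refine ⟨aleph0_le_aleph 1, fun A a ha => ?_⟩
    choose g hg hg' using ha
    have : Countable (Iio a) := (hc a).to_subtype
    refine ⟨range fun y : Iio a => g y.1 y.2, ?_, ?_, ?_⟩
    · rintro _ ⟨y, rfl⟩
      exact hg _ _
    · rw [← countable_iff_lt_aleph_one]
      exact countable_range _
    · exact fun y hy => ⟨_, ⟨⟨y, hy⟩, rfl⟩, hg' y hy⟩
  apply le_antisymm
  · exact csInf_le' mem
  · refine le_csInf ⟨_, mem⟩ fun κ h => ?_
    by_contra! hlt
    rw [← succ_aleph0, Order.lt_succ_iff] at hlt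
    obtain ⟨a⟩ := ‹Nonempty Y›
    obtain ⟨B, hB, hB', haB⟩ := h.2 (Iio a) a fun y hy => ⟨y, hy, le_rfl⟩
    have hfin : B.Finite := lt_aleph0_iff_set_finite.1 (hB'.trans_le hlt)
    obtain ⟨z, hz⟩ := exists_lt a
    obtain ⟨b0, hb0, -⟩ := haB z hz
    obtain ⟨m, hm, hmax⟩ := hfin.exists_maximalFor id B ⟨b0, hb0⟩
    obtain ⟨w, h1, h2⟩ := exists_between (show m < a from hB hm)
    obtain ⟨b, hb, hwb⟩ := haB w h2
    have := hmax hb (h1.le.trans hwb)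
    exact absurd (h1.trans_le hwb) (not_lt.2 this)

lemma exch [DenselyOrdered Y] [NoMinOrder Y] [Nonempty Y] : ¬ ExchOver (C (Y := Y)) ∅ := by
  intro h
  obtain ⟨b⟩ := ‹Nonempty Y›
  obtain ⟨a, hab⟩ := exists_lt b
  have := h a b (fun y hy => ⟨b, by simp, (hy.trans hab).le⟩) (by simp [C_empty])
  obtain ⟨z, h1, h2⟩ := exists_between hab
  obtain ⟨a', ha', hz⟩ := this z h2
  simp only [empty_union, mem_singleton_iff] at ha'
  subst ha'
  exact absurd h1 (not_lt.2 hz)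

end

abbrev O := (Cardinal.aleph 1 : Cardinal.{0}).ord.ToType

instance : NoMinOrder (O ×ₗ ℚ) := ⟨fun x => by
  obtain ⟨q, hq⟩ := exists_lt (ofLex x).2
  exact ⟨toLex ((ofLex x).1, q), by rw [Prod.Lex.lt_iff]; right; exact ⟨rfl, hq⟩⟩⟩

lemma hcount (x : O ×ₗ ℚ) : (Iio x).Countable := by
  have h1 : (Iio (ofLex x).1).Countable := by
    rw [countable_iff_lt_aleph_one]
    simpa using mk_Iio_lt (ofLex x).1
  have h2 : ((Iio (ofLex x).1 ∪ {(ofLex x).1}) ×ˢ (univ : Set ℚ)).Countable :=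
    (h1.union (countable_singleton _)).prod countable_univ
  refine (h2.image toLex).mono ?_
  intro y hy
  refine ⟨ofLex y, ⟨?_, mem_univ _⟩, rfl⟩
  rcases Prod.Lex.lt_iff.1 (show y < x from hy) with h | h
  · exact Or.inl h
  · exact Or.inr h.1

lemma hcard : #(O ×ₗ ℚ) = Cardinal.aleph 1 := by
  have : #(O ×ₗ ℚ) = #(O × ℚ) := mk_congr ofLex
  rw [this]
  simp [mul_eq_left (aleph0_le_aleph 1) (aleph0_le_aleph 1)]

end St14

/-- There is a closure space of cardinality `ℵ₁` which is `ℵ₁`-homogeneous, has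
`∅` closed, `LS(W) = ℵ₀`, `κ(W) = ℵ₁`, and fails exchange over `∅`. -/
theorem stmt14 : ∃ (X : Type) (cl : Set X → Set X), IsClosure cl ∧
    #X = Cardinal.aleph 1 ∧ IsHomog cl (Cardinal.aleph 1) ∧ cl ∅ = ∅ ∧
    LSCard cl = ℵ₀ ∧ kappaCard cl = Cardinal.aleph 1 ∧ ¬ ExchOver cl ∅ := by
  have : Nonempty (St14.O ×ₗ ℚ) := by
    rw [← mk_ne_zero_iff, St14.hcard]
    exact (aleph_pos 1).ne'
  exact ⟨St14.O ×ₗ ℚ, St14.C, St14.isClosure, St14.hcard, St14.isHomog St14.hcount,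
    St14.C_empty, St14.ls St14.hcount St14.hcard, St14.kap St14.hcount, St14.exch⟩
end

section
/- Let K be an abstract elementary class, let λ ≥ LS(K) be a cardinal, and let N ∈ K be a model of cardinality at least λ. If every M ∈ K with M ≤ₖ N and ‖M‖ = λ admits intersections, then N admits intersections. In particular, if every model of K of cardinality λ admits intersections, then every model of K of cardinality at least λ admits intersections. -/
open Cardinal Set FirstOrder

universe u

/-- A `τ`-structure whose universe is a subset of a fixed domain `Ω`. -/
def ModelOn (L : FirstOrder.Language.{u, u}) (Ω : Type u) : Type u :=
  Σ s : Set Ω, L.Structure s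

variable {L : FirstOrder.Language.{u, u}} {Ω : Type u}

noncomputable instance modelStr (M : ModelOn L Ω) : L.Structure ↥M.1 := M.2

/-- `M` is a substructure of `N`: the universe of `M` is a subset of that of `N`
and the inclusion map is an `L`-embedding. -/
def ModelOn.IsSub (M N : ModelOn L Ω) : Prop :=
  M.1 ⊆ N.1 ∧ ∃ e : ↥M.1 ↪[L] ↥N.1, ∀ x : ↥M.1, (e x : Ω) = (x : Ω)

/-- An abstract elementary class whose models have universes contained in `Ω`. -/
structure AECStr (L : FirstOrder.Language.{u, u}) (Ω : Type u) where
  /-- the class of models -/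
  mem : Set (ModelOn L Ω)
  /-- the strong substructure relation `≤ₖ` -/
  le : ModelOn L Ω → ModelOn L Ω → Prop
  /-- the Löwenheim-Skolem-Tarski number -/
  LS : Cardinal.{u}
  le_refl : ∀ M ∈ mem, le M M
  le_antisymm : ∀ {M N}, le M N → le N M → M = N
  le_trans : ∀ {M N P}, le M N → le N P → le M P
  le_mem_left : ∀ {M N}, le M N → M ∈ mem
  le_mem_right : ∀ {M N}, le M N → N ∈ mem
  /-- `M ≤ₖ N` implies that `M` is a substructure of `N` -/
  le_isSub : ∀ {M N}, le M N → ModelOn.IsSub M N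
  /-- `K` and `≤ₖ` respect isomorphisms: if `M ≤ₖ N` and `f : N ≅ N'`, then
  `f[M] ≤ₖ N'` (phrased as: there is `M' ≤ₖ N'` and an isomorphism `g : M ≅ M'`
  agreeing with `f` on `M`). -/
  iso_resp : ∀ {M N N' : ModelOn L Ω}, le M N → ∀ f : ↥N.1 ≃[L] ↥N'.1,
    ∃ (M' : ModelOn L Ω) (g : ↥M.1 ≃[L] ↥M'.1), le M' N' ∧
      ∀ (x : ↥M.1) (y : ↥N.1), (y : Ω) = (x : Ω) → ((g x : Ω)) = ((f y : Ω))
  /-- coherence -/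
  coherence : ∀ {M₀ M₁ M₂}, le M₀ M₂ → le M₁ M₂ → M₀.1 ⊆ M₁.1 → le M₀ M₁
  /-- Tarski-Vaught chain axioms: a `≤ₖ`-directed system has a union which is in
  the class, lies above every member of the system, and is below any common
  extension of the system. -/
  chain_union : ∀ {ι : Type u} (Mi : ι → ModelOn L Ω), Nonempty ι →
    (∀ i j : ι, ∃ k, le (Mi i) (Mi k) ∧ le (Mi j) (Mi k)) →
    ∃ M : ModelOn L Ω, M.1 = ⋃ i, (Mi i).1 ∧ (∀ i, le (Mi i) M) ∧
      ∀ N, (∀ i, le (Mi i) N) → le M N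
  /-- `LS ≥ |τ| + ℵ₀` -/
  LS_ge : L.card + ℵ₀ ≤ LS
  /-- the Löwenheim-Skolem-Tarski axiom -/
  LST : ∀ M ∈ mem, ∀ A : Set Ω, A ⊆ M.1 →
    ∃ M₀, le M₀ M ∧ A ⊆ M₀.1 ∧ #M₀.1 ≤ #A + LS
  /-- `LS` is the least such cardinal -/
  LS_min : ∀ μ : Cardinal.{u}, L.card + ℵ₀ ≤ μ →
    (∀ M ∈ mem, ∀ A : Set Ω, A ⊆ M.1 →
      ∃ M₀, le M₀ M ∧ A ⊆ M₀.1 ∧ #M₀.1 ≤ #A + μ) → LS ≤ μ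

/-- `cl^N(A)`: the intersection of the universes of all `M ≤ₖ N` containing `A`. -/
def aecCl (K : AECStr L Ω) (N : ModelOn L Ω) (A : Set Ω) : Set Ω :=
  {x : Ω | ∀ M : ModelOn L Ω, K.le M N → A ⊆ M.1 → x ∈ M.1}

/-- `N` admits intersections: for every `A ⊆ |N|`, `cl^N(A)` is the universe of
some `M ≤ₖ N`. -/
def AdmitsInter (K : AECStr L Ω) (N : ModelOn L Ω) : Prop :=
  ∀ A : Set Ω, A ⊆ N.1 → ∃ M : ModelOn L Ω, K.le M N ∧ M.1 = aecCl K N A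

/-- There is a `K`-embedding of `M` into `N` fixing `F` pointwise: an isomorphism
from `M` onto some `M' ≤ₖ N` which is the identity on `F`. -/
def KEmbedFixing (K : AECStr L Ω) (M N : ModelOn L Ω) (F : Set Ω) : Prop :=
  ∃ M' : ModelOn L Ω, K.le M' N ∧
    ∃ g : ↥M.1 ≃[L] ↥M'.1, ∀ x : ↥M.1, (x : Ω) ∈ F → ((g x : Ω)) = (x : Ω)

/-- Uniqueness of the generic type, via the characterization of Galois types in
classes admitting intersections: whenever `M ≤ₖ N₁`, `M ≤ₖ N₂` are countable
and `a₁ ∈ |N₁| \ |M|`, `a₂ ∈ |N₂| \ |M|`, there is an isomorphism from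
`cl^{N₁}(|M| ∪ {a₁})` onto `cl^{N₂}(|M| ∪ {a₂})` fixing `M` pointwise and
sending `a₁` to `a₂`. -/
def GenericUnique (K : AECStr L Ω) : Prop :=
  ∀ M N₁ N₂ : ModelOn L Ω, K.le M N₁ → K.le M N₂ →
    #N₁.1 ≤ ℵ₀ → #N₂.1 ≤ ℵ₀ →
    ∀ a₁ a₂ : Ω, a₁ ∈ N₁.1 \ M.1 → a₂ ∈ N₂.1 \ M.1 →
    ∃ M₁ M₂ : ModelOn L Ω, K.le M₁ N₁ ∧ K.le M₂ N₂ ∧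
      M₁.1 = aecCl K N₁ (M.1 ∪ {a₁}) ∧ M₂.1 = aecCl K N₂ (M.1 ∪ {a₂}) ∧
      ∃ g : ↥M₁.1 ≃[L] ↥M₂.1,
        (∀ x : ↥M₁.1, (x : Ω) ∈ M.1 → ((g x : Ω)) = (x : Ω)) ∧
        (∀ x : ↥M₁.1, (x : Ω) = a₁ → ((g x : Ω)) = a₂)

/-- A quasiminimal AEC: countable `LS`, a prime model, countable models admit
intersections, and uniqueness of the generic type over countable models. -/
def IsQuasiminimal (K : AECStr L Ω) : Prop :=
  K.LS = ℵ₀ ∧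
  (∃ M ∈ K.mem, ∀ N ∈ K.mem, KEmbedFixing K M N ∅) ∧
  (∀ N ∈ K.mem, #N.1 ≤ ℵ₀ → AdmitsInter K N) ∧
  GenericUnique K

theorem exists_le_card (K : AECStr L Ω) (lam : Cardinal.{u}) (hlam : K.LS ≤ lam)
    (N : ModelOn L Ω) (hN : N ∈ K.mem) (hc : lam ≤ #N.1) (S : Set Ω) (hS : S ⊆ N.1)
    (hSc : #S ≤ lam) : ∃ M, K.le M N ∧ S ⊆ M.1 ∧ #M.1 = lam := by
  have hinf : ℵ₀ ≤ lam := le_trans (le_trans (self_le_add_left _ _) K.LS_ge) hlam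
  obtain ⟨B, hB, hBc⟩ := Cardinal.le_mk_iff_exists_subset.1 hc
  obtain ⟨M, hM, hSM, hMc⟩ := K.LST N hN (S ∪ B) (Set.union_subset hS hB)
  refine ⟨M, hM, Set.subset_union_left.trans hSM, _root_.le_antisymm ?_ ?_⟩
  · calc #M.1 ≤ #(S ∪ B : Set Ω) + K.LS := hMc
      _ ≤ (#S + #B) + K.LS := by gcongr; exact Cardinal.mk_union_le S B
      _ ≤ (lam + lam) + lam := by gcongr; exact hBc.le
      _ = lam := by rw [Cardinal.add_eq_self hinf, Cardinal.add_eq_self hinf]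
  · rw [← hBc]
    exact Cardinal.mk_le_mk_of_subset (Set.subset_union_right.trans hSM)

theorem small_inter (K : AECStr L Ω) (lam : Cardinal.{u}) (hlam : K.LS ≤ lam)
    (N : ModelOn L Ω) (hN : N ∈ K.mem) (hc : lam ≤ #N.1)
    (h : ∀ M : ModelOn L Ω, K.le M N → #M.1 = lam → AdmitsInter K M)
    (A : Set Ω) (hA : A ⊆ N.1) (hAc : #A ≤ lam) :
    ∃ M : ModelOn L Ω, K.le M N ∧ M.1 = aecCl K N A := by
  have hinf : ℵ₀ ≤ lam := le_trans (le_trans (self_le_add_left _ _) K.LS_ge) hlam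
  obtain ⟨M, hM, hAM, hMc⟩ := exists_le_card K lam hlam N hN hc A hA hAc
  obtain ⟨M0, hM0, hM0e⟩ := h M hM hMc A hAM
  have hA0 : A ⊆ M0.1 := by
    rw [hM0e]; intro x hx P _ hP; exact hP hx
  refine ⟨M0, K.le_trans hM0 hM, Set.Subset.antisymm ?_ ?_⟩
  · intro x hx M' hM' hAM'
    obtain ⟨P, hP, hAP, hPc⟩ := K.LST M' (K.le_mem_left hM') A hAM'
    have hPN := K.le_trans hP hM'
    have hPl : #P.1 ≤ lam := hPc.trans
      ((add_le_add hAc hlam).trans (Cardinal.add_eq_self hinf).le)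
    obtain ⟨Q, hQ, hSQ, hQc⟩ := exists_le_card K lam hlam N hN hc (M.1 ∪ P.1)
      (Set.union_subset (K.le_isSub hM).1 (K.le_isSub hPN).1)
      ((Cardinal.mk_union_le _ _).trans
        ((add_le_add hMc.le hPl).trans (Cardinal.add_eq_self hinf).le))
    have hMQ : K.le M Q := K.coherence hM hQ (Set.subset_union_left.trans hSQ)
    have hPQ : K.le P Q := K.coherence hPN hQ (Set.subset_union_right.trans hSQ)
    obtain ⟨M1, hM1, hM1e⟩ := h Q hQ hQc A (hAM.trans (K.le_isSub hMQ).1)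
    have h1M : M1.1 ⊆ M.1 := by
      rw [hM1e]; intro y hy; exact hy M hMQ hAM
    have h1P : M1.1 ⊆ P.1 := by
      rw [hM1e]; intro y hy; exact hy P hPQ hAP
    have hA1 : A ⊆ M1.1 := by
      rw [hM1e]; intro y hy P _ hP; exact hP hy
    have hle : K.le M1 M := K.coherence hM1 hMQ h1M
    rw [hM0e] at hx
    exact (K.le_isSub hP).1 (h1P (hx M1 hle hA1))
  · intro x hx
    exact hx M0 (K.le_trans hM0 hM) hA0

theorem main_inter (K : AECStr L Ω) (lam : Cardinal.{u}) (hlam : K.LS ≤ lam)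
    (N : ModelOn L Ω) (hN : N ∈ K.mem) (hc : lam ≤ #N.1)
    (h : ∀ M : ModelOn L Ω, K.le M N → #M.1 = lam → AdmitsInter K M) :
    AdmitsInter K N := by
  classical
  intro A hA
  have hinf : ℵ₀ ≤ lam := le_trans (le_trans (self_le_add_left _ _) K.LS_ge) hlam
  have key : ∀ F : Finset A, ∃ M : ModelOn L Ω, K.le M N ∧
      M.1 = aecCl K N ((fun a : A => (a : Ω)) '' (F : Set A)) := by
    intro F
    refine small_inter K lam hlam N hN hc h _ ?_ ?_
    · rintro _ ⟨a, _, rfl⟩; exact hA a.2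
    · exact ((Cardinal.lt_aleph0_iff_set_finite.2 (F.finite_toSet.image _)).le).trans hinf
  choose Mi hMi hMe using key
  have hmono : ∀ F G : Finset A, F ⊆ G → K.le (Mi F) (Mi G) := by
    intro F G hFG
    refine K.coherence (hMi F) (hMi G) ?_
    rw [hMe, hMe]
    intro x hx P hP hGP
    exact hx P hP ((Set.image_mono (Finset.coe_subset.2 hFG)).trans hGP)
  obtain ⟨M, hMu, _, hMN⟩ := K.chain_union Mi ⟨∅⟩ (fun F G =>
    ⟨F ∪ G, hmono _ _ Finset.subset_union_left, hmono _ _ Finset.subset_union_right⟩)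
  refine ⟨M, hMN N hMi, Set.Subset.antisymm ?_ ?_⟩
  · rw [hMu]
    intro x hx P hP hAP
    obtain ⟨F, hF⟩ := Set.mem_iUnion.1 hx
    rw [hMe] at hF
    refine hF P hP ?_
    rintro _ ⟨a, _, rfl⟩; exact hAP a.2
  · intro x hx
    refine hx M (hMN N hMi) ?_
    intro a ha
    rw [hMu]
    refine Set.mem_iUnion.2 ⟨{⟨a, ha⟩}, ?_⟩
    rw [hMe]
    intro P _ hP
    exact hP ⟨⟨a, ha⟩, by simp, rfl⟩

/-- If `λ ≥ LS(K)`, `N ∈ K` has cardinality at least `λ`, and every `M ≤ₖ N` of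
cardinality `λ` admits intersections, then `N` admits intersections. In
particular, if every model of `K` of cardinality `λ` admits intersections, then
every model of `K` of cardinality at least `λ` admits intersections. -/
theorem stmt15 (K : AECStr L Ω) (lam : Cardinal.{u}) (hlam : K.LS ≤ lam) :
    (∀ N ∈ K.mem, lam ≤ #N.1 →
      (∀ M : ModelOn L Ω, K.le M N → #M.1 = lam → AdmitsInter K M) →
      AdmitsInter K N) ∧
    ((∀ M ∈ K.mem, #M.1 = lam → AdmitsInter K M) →
      ∀ N ∈ K.mem, lam ≤ #N.1 → AdmitsInter K N) := by
  exact ⟨fun N hN hc h => main_inter K lam hlam N hN hc h,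
    fun h N hN hc => main_inter K lam hlam N hN hc
      (fun M hM hMc => h M (K.le_mem_left hM) hMc)⟩
end

section
/- Let K be a quasiminimal abstract elementary class. Then the restriction of K to countable models has amalgamation and joint embedding: (amalgamation) for all countable M, N₁, N₂ ∈ K with M ≤ₖ N₁ and M ≤ₖ N₂ there exist N ∈ K and K-embeddings f₁ : N₁ → N and f₂ : N₂ → N both fixing M pointwise; (joint embedding) for all countable N₁, N₂ ∈ K there exist N ∈ K and K-embeddings f₁ : N₁ → N and f₂ : N₂ → N. -/
open Cardinal Set FirstOrder

universe u

variable {L : FirstOrder.Language.{u, u}} {Ω : Type u}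

/-- graph of an isomorphism -/
def isoGr {P Q : ModelOn L Ω} (g : ↥P.1 ≃[L] ↥Q.1) : Set (Ω × Ω) :=
  {p | ∃ x : ↥P.1, (x : Ω) = p.1 ∧ (g x : Ω) = p.2}

theorem mem_isoGr_self {P Q : ModelOn L Ω} (g : ↥P.1 ≃[L] ↥Q.1) (x : ↥P.1) :
    ((x : Ω), (g x : Ω)) ∈ isoGr g := ⟨x, rfl, rfl⟩

theorem isoGr_left {P Q : ModelOn L Ω} {g : ↥P.1 ≃[L] ↥Q.1} {a b : Ω}
    (h : (a, b) ∈ isoGr g) : a ∈ P.1 := by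
  obtain ⟨x, hx, -⟩ := h
  simp only at hx
  rw [← hx]; exact x.2

theorem isoGr_right {P Q : ModelOn L Ω} {g : ↥P.1 ≃[L] ↥Q.1} {a b : Ω}
    (h : (a, b) ∈ isoGr g) : b ∈ Q.1 := by
  obtain ⟨x, -, hx⟩ := h
  simp only at hx
  rw [← hx]; exact (g x).2

theorem isoGr_val {P Q : ModelOn L Ω} {g : ↥P.1 ≃[L] ↥Q.1} {b : Ω} {x : ↥P.1}
    (h : ((x : Ω), b) ∈ isoGr g) : (g x : Ω) = b := by
  obtain ⟨y, hy, hb⟩ := h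
  have : y = x := Subtype.ext hy
  subst this
  exact hb

theorem isoGr_uniq {P Q : ModelOn L Ω} {g : ↥P.1 ≃[L] ↥Q.1} {a b b' : Ω}
    (h : (a, b) ∈ isoGr g) (h' : (a, b') ∈ isoGr g) : b = b' := by
  have ha := isoGr_left h
  exact (isoGr_val (x := ⟨a, ha⟩) h).symm.trans (isoGr_val (x := ⟨a, ha⟩) h')

theorem isoGr_symm {P Q : ModelOn L Ω} {g : ↥P.1 ≃[L] ↥Q.1} {a b : Ω} :
    (b, a) ∈ isoGr g.symm ↔ (a, b) ∈ isoGr g := by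
  constructor
  · rintro ⟨y, hy, hb⟩
    exact ⟨g.symm y, hb, by simpa using hy⟩
  · rintro ⟨y, hy, hb⟩
    exact ⟨g y, hb, by simpa using hy⟩

theorem isoGr_sub_left {P Q P' Q' : ModelOn L Ω} {g : ↥P.1 ≃[L] ↥Q.1}
    {g' : ↥P'.1 ≃[L] ↥Q'.1} (h : isoGr g ⊆ isoGr g') : P.1 ⊆ P'.1 := by
  intro a ha
  exact isoGr_left (h (mem_isoGr_self g ⟨a, ha⟩))

theorem isoGr_sub_right {P Q P' Q' : ModelOn L Ω} {g : ↥P.1 ≃[L] ↥Q.1}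
    {g' : ↥P'.1 ≃[L] ↥Q'.1} (h : isoGr g ⊆ isoGr g') : Q.1 ⊆ Q'.1 := by
  intro a ha
  have := isoGr_right (h (mem_isoGr_self g (g.symm ⟨a, ha⟩)))
  simpa using this

theorem isSub_fun {P N : ModelOn L Ω} (h : ModelOn.IsSub P N) {n : ℕ} (f : L.Functions n)
    (x : Fin n → ↥P.1) (y : Fin n → ↥N.1) (hxy : ∀ k, (y k : Ω) = x k) :
    ((Language.Structure.funMap f y : ↥N.1) : Ω) = (Language.Structure.funMap f x : ↥P.1) := by
  obtain ⟨-, e, he⟩ := h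
  have : y = e ∘ x := by
    funext k; apply Subtype.ext; rw [hxy]; exact (he _).symm
  rw [this, ← e.map_fun, he]

theorem isSub_rel {P N : ModelOn L Ω} (h : ModelOn.IsSub P N) {n : ℕ} (f : L.Relations n)
    (x : Fin n → ↥P.1) (y : Fin n → ↥N.1) (hxy : ∀ k, (y k : Ω) = x k) :
    Language.Structure.RelMap f y ↔ Language.Structure.RelMap f x := by
  obtain ⟨-, e, he⟩ := h
  have : y = e ∘ x := by
    funext k; apply Subtype.ext; rw [hxy]; exact (he _).symm
  rw [this, e.map_rel]

theorem isSub_eq {P N : ModelOn L Ω} (h : ModelOn.IsSub P N) (hu : P.1 = N.1) : P = N := by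
  obtain ⟨s, p⟩ := P
  obtain ⟨t, q⟩ := N
  simp only at hu
  subst hu
  have : p = q := by
    apply Language.Structure.ext
    · funext n f x
      exact Subtype.ext (isSub_fun h f x x (fun _ => rfl)).symm
    · funext n f x
      exact propext (isSub_rel h f x x (fun _ => rfl)).symm
  rw [this]

theorem union_iso {ι : Type u} [Nonempty ι] (A B : ι → ModelOn L Ω)
    (g : ∀ i, ↥(A i).1 ≃[L] ↥(B i).1)
    (dir : ∀ i j, ∃ k, isoGr (g i) ⊆ isoGr (g k) ∧ isoGr (g j) ⊆ isoGr (g k))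
    (U V : ModelOn L Ω) (hU : U.1 = ⋃ i, (A i).1) (hV : V.1 = ⋃ i, (B i).1)
    (sU : ∀ i, ModelOn.IsSub (A i) U) (sV : ∀ i, ModelOn.IsSub (B i) V) :
    ∃ F : ↥U.1 ≃[L] ↥V.1, ∀ i, isoGr (g i) ⊆ isoGr F := by
  have hex : ∀ x : ↥U.1, ∃ y : ↥V.1, ∃ i, ((x : Ω), (y : Ω)) ∈ isoGr (g i) := by
    rintro ⟨x, hx⟩
    have hx' := hx
    rw [hU, mem_iUnion] at hx'
    obtain ⟨i, hi⟩ := hx'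
    exact ⟨⟨g i ⟨x, hi⟩, (sV i).1 (g i ⟨x, hi⟩).2⟩, i, mem_isoGr_self (g i) ⟨x, hi⟩⟩
  choose F hF using hex
  have hFv : ∀ i (x : ↥U.1) (b : Ω), ((x : Ω), b) ∈ isoGr (g i) → (F x : Ω) = b := by
    intro i x b hb
    obtain ⟨j, hj⟩ := hF x
    obtain ⟨k, hik, hjk⟩ := dir i j
    have h1 := hik hb
    have h2 := hjk hj
    exact isoGr_uniq h2 h1
  have hinj : Function.Injective F := by
    intro x y hxy
    obtain ⟨i, hi⟩ := hF x
    obtain ⟨j, hj⟩ := hF y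
    obtain ⟨k, hik, hjk⟩ := dir i j
    have h1 := isoGr_symm.2 (hik hi)
    have h2 := isoGr_symm.2 (hjk hj)
    rw [← hxy] at h2
    exact Subtype.ext (isoGr_uniq h1 h2)
  have hsurj : Function.Surjective F := by
    rintro ⟨y, hy⟩
    have hy' := hy
    rw [hV, mem_iUnion] at hy'
    obtain ⟨i, hi⟩ := hy'
    have := mem_isoGr_self (g i).symm ⟨y, hi⟩
    rw [isoGr_symm] at this
    exact ⟨⟨_, (sU i).1 (isoGr_left this)⟩, Subtype.ext (hFv i ⟨_, _⟩ _ this)⟩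
  have hfin : ∀ n (x : Fin n → ↥U.1), ∃ i, ∀ k, (x k : Ω) ∈ (A i).1 := by
    intro n x
    have hd : Directed (· ⊆ ·) (fun i => isoGr (g i)) := fun i j => dir i j
    have : ∀ k, ∃ i, (x k : Ω) ∈ (A i).1 := fun k =>
      mem_iUnion.1 (hU.subset (x k).2)
    choose I hI using this
    obtain ⟨z, hz⟩ := hd.finite_le I
    exact ⟨z, fun k => isoGr_sub_left (hz k) (hI k)⟩
  refine ⟨⟨Equiv.ofBijective F ⟨hinj, hsurj⟩, ?_, ?_⟩, ?_⟩
  · intro n f x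
    obtain ⟨i, hi⟩ := hfin n x
    apply Subtype.ext
    have h1 := isSub_fun (sU i) f (fun k => ⟨x k, hi k⟩) x (fun _ => rfl)
    have h2 := isSub_fun (sV i) f (fun k => g i ⟨x k, hi k⟩) (fun k => F (x k))
      (fun k => hFv i _ _ (mem_isoGr_self (g i) ⟨x k, hi k⟩))
    have h3 := (g i).map_fun f (fun k => ⟨x k, hi k⟩)
    refine (hFv i _ _ ?_).trans h2.symm
    rw [h1]
    have := mem_isoGr_self (g i) (Language.Structure.funMap f (fun k => ⟨x k, hi k⟩))
    rw [h3] at this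
    exact this
  · intro n f x
    obtain ⟨i, hi⟩ := hfin n x
    have h1 := isSub_rel (sU i) f (fun k => ⟨x k, hi k⟩) x (fun _ => rfl)
    have h2 := isSub_rel (sV i) f (fun k => g i ⟨x k, hi k⟩) (fun k => F (x k))
      (fun k => hFv i _ _ (mem_isoGr_self (g i) ⟨x k, hi k⟩))
    have h3 := (g i).map_rel f (fun k => ⟨x k, hi k⟩)
    exact h2.trans (h3.trans h1.symm)
  · rintro i ⟨a, b⟩ h
    exact ⟨⟨a, (sU i).1 (isoGr_left h)⟩, rfl, hFv i ⟨a, _⟩ b h⟩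

theorem extend_iso (K : AECStr L Ω) (hG : GenericUnique K) {N₁ N₂ P Q : ModelOn L Ω}
    (c₁ : #N₁.1 ≤ ℵ₀) (c₂ : #N₂.1 ≤ ℵ₀) (hP : K.le P N₁) (hQ : K.le Q N₂)
    (g : ↥P.1 ≃[L] ↥Q.1) (a₁ a₂ : Ω) (h₁ : a₁ ∈ N₁.1 \ P.1) (h₂ : a₂ ∈ N₂.1 \ Q.1)
    (j : ↥(N₁.1 \ P.1) ↪ ↥(N₂.1 \ Q.1)) :
    ∃ (P' Q' : ModelOn L Ω) (g' : ↥P'.1 ≃[L] ↥Q'.1), K.le P' N₁ ∧ K.le Q' N₂ ∧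
      isoGr g ⊆ isoGr g' ∧ a₁ ∈ P'.1 := by
  classical
  let H : ↥N₁.1 → Ω := fun x => if h : (x : Ω) ∈ P.1 then (g ⟨x, h⟩ : Ω) else (j ⟨x, x.2, h⟩ : Ω)
  have Hpos : ∀ (x : ↥N₁.1) (h : (x : Ω) ∈ P.1), H x = g ⟨x, h⟩ := fun x h => dif_pos h
  have Hneg : ∀ (x : ↥N₁.1) (h : (x : Ω) ∉ P.1), H x = j ⟨x, x.2, h⟩ := fun x h => dif_neg h
  have HQ : ∀ x : ↥N₁.1, H x ∈ Q.1 ↔ (x : Ω) ∈ P.1 := by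
    intro x
    by_cases h : (x : Ω) ∈ P.1
    · rw [Hpos x h]; exact iff_of_true (g _).2 h
    · rw [Hneg x h]; exact iff_of_false (j _).2.2 h
  have Hinj : Function.Injective H := by
    intro x y hxy
    by_cases h : (x : Ω) ∈ P.1
    · have h' : (y : Ω) ∈ P.1 := by rwa [← HQ, ← hxy, HQ]
      rw [Hpos x h, Hpos y h'] at hxy
      have := g.injective (Subtype.ext hxy)
      exact Subtype.ext (Subtype.mk.inj this)
    · have h' : (y : Ω) ∉ P.1 := by rwa [← HQ, ← hxy, HQ]
      rw [Hneg x h, Hneg y h'] at hxy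
      have := j.injective (Subtype.ext hxy)
      exact Subtype.ext (Subtype.mk.inj this)
  let e := Equiv.ofInjective H Hinj
  obtain ⟨N', φ, hφ⟩ : ∃ (N' : ModelOn L Ω) (φ : ↥N₁.1 ≃[L] ↥N'.1), ∀ x, (φ x : Ω) = H x :=
    ⟨⟨range H, e.inducedStructure⟩, @Equiv.inducedStructureEquiv L _ _ N₁.2 e, fun _ => rfl⟩
  have c' : #N'.1 ≤ ℵ₀ := (mk_congr φ.toEquiv).symm.le.trans c₁
  have hQN' : K.le Q N' := by
    obtain ⟨M', k, hM', hk⟩ := K.iso_resp hP φ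
    have hk' : ∀ x, (k x : Ω) = g x := by
      intro x
      rw [hk x ⟨x, (K.le_isSub hP).1 x.2⟩ rfl, hφ, Hpos _ x.2]
    have hu : M'.1 = Q.1 := by
      apply Subset.antisymm
      · intro y hy
        have := hk' (k.symm ⟨y, hy⟩)
        simp only [Language.Equiv.apply_symm_apply] at this
        rw [this]; exact (g _).2
      · intro y hy
        have := hk' (g.symm ⟨y, hy⟩)
        simp only [Language.Equiv.apply_symm_apply] at this
        rw [← this]; exact (k _).2
    have : M' = Q := by
      refine isSub_eq ⟨hu.subset, (g.comp k.symm).toEmbedding, ?_⟩ hu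
      intro x
      change (g (k.symm x) : Ω) = x
      rw [← hk', Language.Equiv.apply_symm_apply]
    rwa [← this]
  have ha : H ⟨a₁, h₁.1⟩ ∈ N'.1 \ Q.1 :=
    ⟨hφ ⟨a₁, h₁.1⟩ ▸ (φ _).2, fun h => h₁.2 ((HQ _).1 h)⟩
  obtain ⟨P₁, Q', hP₁, hQ', eP₁, -, k, hk, -⟩ :=
    hG Q N' N₂ hQN' hQ c' c₂ _ a₂ ha h₂
  have hsub : Q.1 ∪ {H ⟨a₁, h₁.1⟩} ⊆ P₁.1 := by
    rw [eP₁]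
    intro x hx M hM hA
    exact hA hx
  obtain ⟨P', r, hP', hr⟩ := K.iso_resp hP₁ φ.symm
  have hr' : ∀ (x : ↥N₁.1) (h : H x ∈ P₁.1), (r ⟨H x, h⟩ : Ω) = x := by
    intro x h
    rw [hr ⟨H x, h⟩ (φ x) (hφ x), Language.Equiv.symm_apply_apply]
  refine ⟨P', Q', k.comp r.symm, hP', hQ', ?_, ?_⟩
  · rintro ⟨a, b⟩ ⟨x, rfl, rfl⟩
    let x' : ↥N₁.1 := ⟨x, (K.le_isSub hP).1 x.2⟩
    have hx' : H x' = g x := Hpos x' x.2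
    have hm : H x' ∈ P₁.1 := hsub (Or.inl (by rw [hx']; exact (g x).2))
    refine ⟨r ⟨H x', hm⟩, hr' x' hm, ?_⟩
    change (k (r.symm (r ⟨H x', hm⟩)) : Ω) = g x
    rw [Language.Equiv.symm_apply_apply]
    exact (hk ⟨H x', hm⟩ ((HQ x').2 x.2)).trans hx'
  · have hm : H ⟨a₁, h₁.1⟩ ∈ P₁.1 := hsub (Or.inr rfl)
    have := hr' _ hm
    simp only at this
    rw [← this]
    exact (r _).2

theorem compare_models (K : AECStr L Ω) (hG : GenericUnique K) {N₁ N₂ P₀ Q₀ : ModelOn L Ω}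
    (c₁ : #N₁.1 ≤ ℵ₀) (c₂ : #N₂.1 ≤ ℵ₀) (hP₀ : K.le P₀ N₁) (hQ₀ : K.le Q₀ N₂)
    (g₀ : ↥P₀.1 ≃[L] ↥Q₀.1) :
    (∃ (Q : ModelOn L Ω) (g : ↥N₁.1 ≃[L] ↥Q.1), K.le Q N₂ ∧ isoGr g₀ ⊆ isoGr g) ∨
    (∃ (P : ModelOn L Ω) (g : ↥P.1 ≃[L] ↥N₂.1), K.le P N₁ ∧ isoGr g₀ ⊆ isoGr g) := by
  let S : Set (Set (Ω × Ω)) := {R | ∃ (P Q : ModelOn L Ω) (g : ↥P.1 ≃[L] ↥Q.1),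
    K.le P N₁ ∧ K.le Q N₂ ∧ isoGr g = R}
  obtain ⟨R, h0R, hmax⟩ := zorn_subset_nonempty S (by
    intro c hc hch hne
    have : Nonempty ↥c := hne.to_subtype
    have hc' : ∀ i : ↥c, (i : Set (Ω × Ω)) ∈ S := fun i => hc i.2
    choose A B g hA hB hg using hc'
    have dir : ∀ i j, ∃ k, isoGr (g i) ⊆ isoGr (g k) ∧ isoGr (g j) ⊆ isoGr (g k) := by
      intro i j
      obtain ⟨k, hk, h1, h2⟩ := hch.directedOn i i.2 j j.2
      refine ⟨⟨k, hk⟩, ?_, ?_⟩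
      · rw [hg, hg]; exact h1
      · rw [hg, hg]; exact h2
    obtain ⟨U, eU, hU, hU'⟩ := K.chain_union A inferInstance (fun i j => by
      obtain ⟨k, h1, h2⟩ := dir i j
      exact ⟨k, K.coherence (hA i) (hA k) (isoGr_sub_left h1),
        K.coherence (hA j) (hA k) (isoGr_sub_left h2)⟩)
    obtain ⟨V, eV, hV, hV'⟩ := K.chain_union B inferInstance (fun i j => by
      obtain ⟨k, h1, h2⟩ := dir i j
      exact ⟨k, K.coherence (hB i) (hB k) (isoGr_sub_right h1),
        K.coherence (hB j) (hB k) (isoGr_sub_right h2)⟩)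
    obtain ⟨F, hF⟩ := union_iso A B g dir U V eU eV (fun i => K.le_isSub (hU i))
      (fun i => K.le_isSub (hV i))
    refine ⟨isoGr F, ⟨U, V, F, hU' _ hA, hV' _ hB, rfl⟩, ?_⟩
    intro s hs
    exact (hg ⟨s, hs⟩).symm.subset.trans (hF ⟨s, hs⟩)) (isoGr g₀) ⟨P₀, Q₀, g₀, hP₀, hQ₀, rfl⟩
  obtain ⟨P, Q, g, hP, hQ, rfl⟩ := hmax.prop
  have hmax' : ∀ (P' Q' : ModelOn L Ω) (g' : ↥P'.1 ≃[L] ↥Q'.1), K.le P' N₁ → K.le Q' N₂ →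
      isoGr g ⊆ isoGr g' → isoGr g' ⊆ isoGr g :=
    fun P' Q' g' h1 h2 h3 => hmax.le_of_ge ⟨P', Q', g', h1, h2, rfl⟩ h3
  by_cases e1 : P.1 = N₁.1
  · have := isSub_eq (K.le_isSub hP) e1
    subst this
    exact Or.inl ⟨Q, g, hQ, h0R⟩
  by_cases e2 : Q.1 = N₂.1
  · have := isSub_eq (K.le_isSub hQ) e2
    subst this
    exact Or.inr ⟨P, g, hP, h0R⟩
  exfalso
  obtain ⟨a₁, ha₁⟩ : (N₁.1 \ P.1).Nonempty := by
    rw [sdiff_nonempty]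
    exact fun h => e1 (Subset.antisymm (K.le_isSub hP).1 h)
  obtain ⟨a₂, ha₂⟩ : (N₂.1 \ Q.1).Nonempty := by
    rw [sdiff_nonempty]
    exact fun h => e2 (Subset.antisymm (K.le_isSub hQ).1 h)
  rcases Function.Embedding.total ↥(N₁.1 \ P.1) ↥(N₂.1 \ Q.1) with ⟨⟨j⟩⟩ | ⟨⟨j⟩⟩
  · obtain ⟨P', Q', g', hP', hQ', hs, ha⟩ := extend_iso K hG c₁ c₂ hP hQ g a₁ a₂ ha₁ ha₂ j
    exact ha₁.2 (isoGr_sub_left (hmax' P' Q' g' hP' hQ' hs) ha)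
  · obtain ⟨Q', P', g', hQ', hP', hs, ha⟩ :=
      extend_iso K hG c₂ c₁ hQ hP g.symm a₂ a₁ ha₂ ha₁ j
    refine ha₂.2 (isoGr_sub_right (hmax' P' Q' g'.symm hP' hQ' ?_) ha)
    rintro ⟨a, b⟩ h
    exact isoGr_symm.2 (hs (isoGr_symm.2 h))

theorem compare_embed (K : AECStr L Ω) (hG : GenericUnique K) {N₁ N₂ P₀ Q₀ : ModelOn L Ω}
    (c₁ : #N₁.1 ≤ ℵ₀) (c₂ : #N₂.1 ≤ ℵ₀) (hP₀ : K.le P₀ N₁) (hQ₀ : K.le Q₀ N₂)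
    (g₀ : ↥P₀.1 ≃[L] ↥Q₀.1) (F : Set Ω) (hF : ∀ x ∈ F, (x, x) ∈ isoGr g₀) :
    ∃ N ∈ K.mem, KEmbedFixing K N₁ N F ∧ KEmbedFixing K N₂ N F := by
  have hself : ∀ N ∈ K.mem, KEmbedFixing K N N F := fun N hN =>
    ⟨N, K.le_refl N hN, Language.Equiv.refl L _, fun x _ => rfl⟩
  have m1 := K.le_mem_right hP₀
  have m2 := K.le_mem_right hQ₀
  rcases compare_models K hG c₁ c₂ hP₀ hQ₀ g₀ with ⟨Q, g, hQ, hg⟩ | ⟨P, g, hP, hg⟩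
  · exact ⟨N₂, m2, ⟨Q, hQ, g, fun x hx => isoGr_val (hg (hF x hx))⟩, hself _ m2⟩
  · exact ⟨N₁, m1, hself _ m1,
      ⟨P, hP, g.symm, fun x hx => isoGr_val (isoGr_symm.2 (hg (hF x hx)))⟩⟩

/-- The restriction of a quasiminimal AEC to countable models has amalgamation
and joint embedding. -/
theorem stmt16 (K : AECStr L Ω) (hK : IsQuasiminimal K) :
    (∀ M N₁ N₂ : ModelOn L Ω, #M.1 ≤ ℵ₀ → #N₁.1 ≤ ℵ₀ → #N₂.1 ≤ ℵ₀ →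
      K.le M N₁ → K.le M N₂ →
      ∃ N ∈ K.mem, KEmbedFixing K N₁ N M.1 ∧ KEmbedFixing K N₂ N M.1) ∧
    (∀ N₁ N₂ : ModelOn L Ω, N₁ ∈ K.mem → N₂ ∈ K.mem →
      #N₁.1 ≤ ℵ₀ → #N₂.1 ≤ ℵ₀ →
      ∃ N ∈ K.mem, KEmbedFixing K N₁ N ∅ ∧ KEmbedFixing K N₂ N ∅) := by
  obtain ⟨-, ⟨M₀, -, hM₀⟩, -, hG⟩ := hK
  refine ⟨?_, ?_⟩
  · intro M N₁ N₂ _ c₁ c₂ h₁ h₂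
    exact compare_embed K hG c₁ c₂ h₁ h₂ (Language.Equiv.refl L _) M.1
      (fun x hx => ⟨⟨x, hx⟩, rfl, rfl⟩)
  · intro N₁ N₂ h₁ h₂ c₁ c₂
    obtain ⟨P, hP, p, -⟩ := hM₀ N₁ h₁
    obtain ⟨Q, hQ, q, -⟩ := hM₀ N₂ h₂
    exact compare_embed K hG c₁ c₂ hP hQ (q.comp p.symm) ∅ (fun x hx => hx.elim)
end

section
/- Let K be a quasiminimal abstract elementary class. Then every model of K admits intersections, and for every N ∈ K the pair (|N|, cl^N) is a pregeometry (i.e., a closure space with finite character and exchange) whose closed sets are exactly the universes of the M ∈ K with M ≤ₖ N. -/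
open Cardinal Set FirstOrder

universe u

variable {L : FirstOrder.Language.{u, u}} {Ω : Type u}

namespace QM

theorem le_sub (K : AECStr L Ω) {M N : ModelOn L Ω} (h : K.le M N) : M.1 ⊆ N.1 := (K.le_isSub h).1

theorem le_eq (K : AECStr L Ω) {M M' N : ModelOn L Ω} (h : K.le M N) (h' : K.le M' N)
    (e : M.1 = M'.1) : M = M' :=
  K.le_antisymm (K.coherence h h' e.subset) (K.coherence h' h e.symm.subset)

/-! ### closure -/

theorem cl_ext (K : AECStr L Ω) (N : ModelOn L Ω) (A : Set Ω) : A ⊆ aecCl K N A :=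
  fun _ hx _ _ hA => hA hx

theorem cl_mono (K : AECStr L Ω) (N : ModelOn L Ω) {A B : Set Ω} (h : A ⊆ B) :
    aecCl K N A ⊆ aecCl K N B :=
  fun _ hx M hM hB => hx M hM (h.trans hB)

theorem cl_min (K : AECStr L Ω) (N : ModelOn L Ω) {A B : Set Ω} (h : A ⊆ aecCl K N B) :
    aecCl K N A ⊆ aecCl K N B :=
  fun _ hx M hM hB => hx M hM (fun _ ha => h ha M hM hB)

theorem cl_le (K : AECStr L Ω) {M N : ModelOn L Ω} {A : Set Ω} (h : K.le M N) (hA : A ⊆ M.1) :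
    aecCl K N A ⊆ M.1 := fun _ hx => hx M h hA

theorem cl_sub (K : AECStr L Ω) {N : ModelOn L Ω} (hN : N ∈ K.mem) {A : Set Ω} (hA : A ⊆ N.1) :
    aecCl K N A ⊆ N.1 := cl_le K (K.le_refl N hN) hA

theorem cl_model (K : AECStr L Ω) {M N : ModelOn L Ω} (h : K.le M N) :
    aecCl K N M.1 = M.1 := (cl_le K h subset_rfl).antisymm (cl_ext K N _)

theorem cl_restrict (K : AECStr L Ω) {N' N : ModelOn L Ω} (h : K.le N' N) {A : Set Ω}
    (hA : A ⊆ N'.1) (hi : ∃ M : ModelOn L Ω, K.le M N ∧ M.1 = aecCl K N A) :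
    aecCl K N' A = aecCl K N A := by
  obtain ⟨P, hP, hPe⟩ := hi
  apply Subset.antisymm
  · rw [← hPe]
    have : P.1 ⊆ N'.1 := by rw [hPe]; exact cl_le K h hA
    exact cl_le K (K.coherence hP h this) (by rw [hPe]; exact cl_ext K N A)
  · intro x hx M hM hAM
    exact hx M (K.le_trans hM h) hAM

theorem ctble_ext (K : AECStr L Ω) (hLS : K.LS = ℵ₀) {N : ModelOn L Ω} (hN : N ∈ K.mem)
    {A : Set Ω} (hA : A ⊆ N.1) (hc : A.Countable) :
    ∃ M, K.le M N ∧ A ⊆ M.1 ∧ #M.1 ≤ ℵ₀ := by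
  obtain ⟨M, h1, h2, h3⟩ := K.LST N hN A hA
  refine ⟨M, h1, h2, h3.trans ?_⟩
  rw [hLS]
  have : #A ≤ ℵ₀ := Cardinal.le_aleph0_iff_set_countable.2 hc
  exact Cardinal.add_le_aleph0.2 ⟨this, le_rfl⟩

theorem cl_ctble (K : AECStr L Ω) (hLS : K.LS = ℵ₀)
    (hI : ∀ N ∈ K.mem, #N.1 ≤ ℵ₀ → AdmitsInter K N)
    {N : ModelOn L Ω} (hN : N ∈ K.mem)
    {A : Set Ω} (hA : A ⊆ N.1) (hc : A.Countable) :
    ∃ M, K.le M N ∧ M.1 = aecCl K N A ∧ #M.1 ≤ ℵ₀ := by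
  obtain ⟨N0, h1, h2, h3⟩ := ctble_ext K hLS hN hA hc
  obtain ⟨P, hP, hPe⟩ := hI N0 (K.le_mem_left h1) h3 A h2
  refine ⟨P, K.le_trans hP h1, ?_, (Cardinal.mk_le_mk_of_subset (le_sub K hP)).trans h3⟩
  apply Subset.antisymm
  · intro x hx M hM hAM
    obtain ⟨M0, m1, m2, m3⟩ := ctble_ext K hLS (K.le_mem_left hM) hAM hc
    have m4 := K.le_trans m1 hM
    obtain ⟨N2, n1, n2, n3⟩ := ctble_ext K hLS hN (A := N0.1 ∪ M0.1)
      (union_subset (le_sub K h1) (le_sub K m4))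
      ((Cardinal.le_aleph0_iff_set_countable.1 h3).union
        (Cardinal.le_aleph0_iff_set_countable.1 m3))
    have i2 := hI N2 (K.le_mem_left n1) n3
    have l1 : K.le N0 N2 := K.coherence h1 n1 (subset_union_left.trans n2)
    have l2 : K.le M0 N2 := K.coherence m4 n1 (subset_union_right.trans n2)
    have e1 := cl_restrict K l1 h2 (i2 A (h2.trans (le_sub K l1)))
    rw [hPe, e1] at hx
    exact le_sub K m1 (hx M0 l2 m2)
  · exact cl_le K (K.le_trans hP h1) (by rw [hPe]; exact cl_ext K N0 A)

theorem cl_all (K : AECStr L Ω) (hLS : K.LS = ℵ₀)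
    (hI : ∀ N ∈ K.mem, #N.1 ≤ ℵ₀ → AdmitsInter K N)
    {N : ModelOn L Ω} (hN : N ∈ K.mem)
    {A : Set Ω} (hA : A ⊆ N.1) :
    ∃ M, K.le M N ∧ M.1 = aecCl K N A ∧
      ∀ a ∈ M.1, ∃ A₀ : Set Ω, A₀ ⊆ A ∧ A₀.Finite ∧ a ∈ aecCl K N A₀ := by
  have key : ∀ s : {s : Set Ω // s ⊆ A ∧ s.Finite}, ∃ M, K.le M N ∧ M.1 = aecCl K N s.1 := by
    rintro ⟨s, hs, hf⟩
    obtain ⟨M, h1, h2, _⟩ := cl_ctble K hLS hI hN (hs.trans hA) hf.countable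
    exact ⟨M, h1, h2⟩
  choose Mi hle heq using key
  obtain ⟨M, h1, h2, h3⟩ := K.chain_union Mi ⟨⟨∅, empty_subset _, finite_empty⟩⟩ (by
    rintro i j
    refine ⟨⟨i.1 ∪ j.1, union_subset i.2.1 j.2.1, i.2.2.union j.2.2⟩, ?_, ?_⟩
    · refine K.coherence (hle _) (hle _) ?_
      rw [heq, heq]; exact cl_mono K N subset_union_left
    · refine K.coherence (hle _) (hle _) ?_
      rw [heq, heq]; exact cl_mono K N subset_union_right)
  have hMN := h3 N hle
  have hfin : ∀ a ∈ M.1, ∃ A₀ : Set Ω, A₀ ⊆ A ∧ A₀.Finite ∧ a ∈ aecCl K N A₀ := by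
    intro a ha
    rw [h1] at ha
    obtain ⟨i, hi⟩ := mem_iUnion.1 ha
    rw [heq] at hi
    exact ⟨i.1, i.2.1, i.2.2, hi⟩
  refine ⟨M, hMN, Subset.antisymm ?_ ?_, hfin⟩
  · intro a ha
    obtain ⟨A0, h, _, h'⟩ := hfin a ha
    exact cl_mono K N h h'
  · refine cl_le K hMN ?_
    intro a ha
    rw [h1]
    refine mem_iUnion.2 ⟨⟨{a}, singleton_subset_iff.2 ha, finite_singleton a⟩, ?_⟩
    rw [heq]; exact cl_ext K N _ rfl

/-! ### isomorphisms -/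

def MIso (M N : ModelOn L Ω) (φ : Ω → Ω) : Prop :=
  ∃ g : ↥M.1 ≃[L] ↥N.1, ∀ x : ↥M.1, (g x : Ω) = φ x

theorem MIso.refl (M : ModelOn L Ω) : MIso M M id := ⟨FirstOrder.Language.Equiv.refl L _, fun _ => rfl⟩

theorem MIso.congr {M N : ModelOn L Ω} {φ ψ : Ω → Ω} (h : MIso M N φ) (e : EqOn φ ψ M.1) :
    MIso M N ψ := by
  obtain ⟨g, hg⟩ := h
  exact ⟨g, fun x => (hg x).trans (e x.2)⟩

theorem MIso.trans {M N P : ModelOn L Ω} {φ ψ : Ω → Ω} (h : MIso M N φ) (h' : MIso N P ψ) :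
    MIso M P (ψ ∘ φ) := by
  obtain ⟨g, hg⟩ := h
  obtain ⟨g', hg'⟩ := h'
  exact ⟨g'.comp g, fun x => by simp [hg', hg]⟩

theorem MIso.image {M N : ModelOn L Ω} {φ : Ω → Ω} (h : MIso M N φ) : φ '' M.1 = N.1 := by
  obtain ⟨g, hg⟩ := h
  ext y
  constructor
  · rintro ⟨x, hx, rfl⟩
    have := hg ⟨x, hx⟩
    rw [← this]; exact (g _).2
  · intro hy
    refine ⟨g.symm ⟨y, hy⟩, (g.symm ⟨y, hy⟩).2, ?_⟩
    rw [← hg]; simp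

theorem MIso.injOn {M N : ModelOn L Ω} {φ : Ω → Ω} (h : MIso M N φ) : InjOn φ M.1 := by
  obtain ⟨g, hg⟩ := h
  intro x hx y hy hxy
  have : g ⟨x, hx⟩ = g ⟨y, hy⟩ := Subtype.ext (by rw [hg, hg]; exact hxy)
  simpa using g.injective this

theorem MIso.symm {M N : ModelOn L Ω} {φ : Ω → Ω} (h : MIso M N φ) :
    ∃ ψ, MIso N M ψ ∧ (∀ x ∈ M.1, ψ (φ x) = x) ∧ (∀ y ∈ N.1, φ (ψ y) = y) := by
  classical
  obtain ⟨g, hg⟩ := h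
  refine ⟨fun y => if hy : y ∈ N.1 then (g.symm ⟨y, hy⟩ : Ω) else y, ⟨g.symm, ?_⟩, ?_, ?_⟩
  · intro x; simp
  · intro x hx
    have h1 : φ x ∈ N.1 := by have := hg ⟨x, hx⟩; rw [← this]; exact (g _).2
    have h2 : (⟨φ x, h1⟩ : N.1) = g ⟨x, hx⟩ := Subtype.ext (hg ⟨x, hx⟩).symm
    simp only [h1, dif_pos, h2]; simp
  · intro y hy
    simp only [hy, dif_pos]
    rw [← hg]; simp

theorem MIso.eq_of_id {M N : ModelOn L Ω} (h : MIso M N id) : M = N := by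
  have hi := h.image
  obtain ⟨s, σ⟩ := M
  obtain ⟨t, τ⟩ := N
  simp only [image_id] at hi
  subst hi
  obtain ⟨g, hg⟩ := h
  have hg' : ∀ x, g x = x := fun x => Subtype.ext (hg x)
  have hc : ∀ {n : ℕ} (x : Fin n → s), (g ∘ x : Fin n → s) = x := fun x => funext fun i => hg' _
  congr 1
  apply FirstOrder.Language.Structure.ext
  · funext n f x
    have := @FirstOrder.Language.Equiv.map_fun L s s σ τ g n f x
    rw [hg'] at this
    refine Eq.trans this ?_
    exact congrArg _ (hc x)
  · funext n r x
    have := @FirstOrder.Language.Equiv.map_rel L s s σ τ g n r x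
    apply propext
    refine this.symm.trans ?_
    refine iff_of_eq ?_
    exact congrArg _ (hc x)

theorem MIso.unique {M N N' : ModelOn L Ω} {φ : Ω → Ω} (h : MIso M N φ) (h' : MIso M N' φ) :
    N = N' := by
  obtain ⟨ψ, h1, h2, h3⟩ := h.symm
  exact ((h1.trans h').congr (fun y hy => h3 y hy)).eq_of_id

theorem MIso.restrict (K : AECStr L Ω) {M N N' : ModelOn L Ω} {φ : Ω → Ω} (h : MIso N N' φ)
    (hM : K.le M N) : ∃ M', K.le M' N' ∧ MIso M M' φ := by
  obtain ⟨g, hg⟩ := h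
  obtain ⟨M', g', h1, h2⟩ := K.iso_resp hM g
  refine ⟨M', h1, g', fun x => ?_⟩
  rw [h2 x ⟨x, le_sub K hM x.2⟩ rfl, hg]

theorem MIso.mem (K : AECStr L Ω) {N N' : ModelOn L Ω} {φ : Ω → Ω} (h : MIso N N' φ)
    (hN : N ∈ K.mem) : N' ∈ K.mem := by
  obtain ⟨M', h1, h2⟩ := h.restrict K (K.le_refl N hN)
  exact K.le_mem_right h1

theorem cl_image_sub (K : AECStr L Ω) {N N' : ModelOn L Ω} {φ : Ω → Ω} (h : MIso N N' φ)
    (hN : N ∈ K.mem) {A : Set Ω} (hA : A ⊆ N.1) :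
    φ '' aecCl K N A ⊆ aecCl K N' (φ '' A) := by
  rintro _ ⟨x, hx, rfl⟩ M hM hAM
  obtain ⟨ψ, h1, h2, h3⟩ := h.symm
  obtain ⟨M', h4, h5⟩ := h1.restrict K hM
  have : x ∈ M'.1 := hx M' h4 (by
    intro a ha
    rw [← h5.image]
    exact ⟨φ a, hAM ⟨a, ha, rfl⟩, h2 a (hA ha)⟩)
  rw [← h5.image] at this
  obtain ⟨y, hy, rfl⟩ := this
  rw [h3 y (le_sub K hM hy)]; exact hy

theorem cl_image (K : AECStr L Ω) {N N' : ModelOn L Ω} {φ : Ω → Ω} (h : MIso N N' φ)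
    (hN : N ∈ K.mem) {A : Set Ω} (hA : A ⊆ N.1) :
    φ '' aecCl K N A = aecCl K N' (φ '' A) := by
  refine (cl_image_sub K h hN hA).antisymm ?_
  obtain ⟨ψ, h1, h2, h3⟩ := h.symm
  have hN' := h.mem K hN
  have hA' : φ '' A ⊆ N'.1 := by rw [← h.image]; exact image_mono hA
  have := cl_image_sub K h1 hN' hA'
  have e : ψ '' (φ '' A) = A := by
    rw [image_image]
    have : EqOn (fun x => ψ (φ x)) id A := fun x hx => h2 x (hA hx)
    rw [this.image_eq, image_id]
  rw [e] at this
  intro y hy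
  exact ⟨ψ y, this ⟨y, hy, rfl⟩, h3 y (cl_sub K hN' hA' hy)⟩

theorem transport (K : AECStr L Ω) {M N M2 : ModelOn L Ω} {φ : Ω → Ω} (h : MIso M M2 φ)
    (hM : K.le M N) (hc : N.1.Countable) {T : Set Ω} (hT : T.Infinite) (hd : Disjoint M2.1 T) :
    ∃ N2 φ', MIso N N2 φ' ∧ EqOn φ' φ M.1 ∧ K.le M2 N2 ∧ N2.1 ⊆ M2.1 ∪ T := by
  classical
  have := hc.to_subtype
  obtain ⟨j, hj⟩ := exists_injective_nat N.1
  let i : ℕ ↪ T := hT.natEmbedding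
  let F : Ω → Ω := fun x => if x ∈ M.1 then φ x else if hx : x ∈ N.1 then i (j ⟨x, hx⟩) else x
  have hF1 : ∀ x ∈ M.1, F x = φ x := fun x hx => if_pos hx
  have hF2 : ∀ x (hx : x ∈ N.1), x ∉ M.1 → F x = i (j ⟨x, hx⟩) := by
    intro x hx hx'
    simp only [F]
    rw [if_neg hx', dif_pos hx]
  have hFM : ∀ x ∈ M.1, F x ∈ M2.1 := by
    intro x hx; rw [hF1 x hx, ← h.image]; exact ⟨x, hx, rfl⟩
  have hFT : ∀ x ∈ N.1, x ∉ M.1 → F x ∈ T := by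
    intro x hx hx'; rw [hF2 x hx hx']; exact (i _).2
  have hinj : InjOn F N.1 := by
    intro x hx y hy hxy
    by_cases hx' : x ∈ M.1 <;> by_cases hy' : y ∈ M.1
    · rw [hF1 x hx', hF1 y hy'] at hxy
      exact h.injOn hx' hy' hxy
    · exact absurd (hxy ▸ hFT y hy hy') (disjoint_left.1 hd (hFM x hx'))
    · exact absurd (hxy ▸ hFT x hx hx') (disjoint_left.1 hd (hFM y hy'))
    · rw [hF2 x hx hx', hF2 y hy hy'] at hxy
      have := hj (i.injective (Subtype.ext hxy))
      simpa using this
  let e : N.1 ≃ (F '' N.1 : Set Ω) := Equiv.Set.imageOfInjOn F N.1 hinj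
  let N2 : ModelOn L Ω := ⟨F '' N.1, e.inducedStructure⟩
  have hiso : MIso N N2 F := ⟨e.inducedStructureEquiv, fun x => rfl⟩
  obtain ⟨M', h1, h2⟩ := hiso.restrict K hM
  have : M' = M2 := (h2.congr hF1).unique h
  subst this
  refine ⟨N2, F, hiso, hF1, h1, ?_⟩
  rintro _ ⟨x, hx, rfl⟩
  by_cases hx' : x ∈ M.1
  · exact Or.inl (hFM x hx')
  · exact Or.inr (hFT x hx hx')

theorem MIso.ctble {M N : ModelOn L Ω} {φ : Ω → Ω} (h : MIso M N φ) (hc : M.1.Countable) :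
    N.1.Countable := by rw [← h.image]; exact hc.image _

theorem generic (K : AECStr L Ω) (hG : GenericUnique K) {M1 N1 M2 N2 : ModelOn L Ω}
    {φ : Ω → Ω} (h1 : K.le M1 N1) (h2 : K.le M2 N2) (hc1 : N1.1.Countable) (hc2 : N2.1.Countable)
    (hT : (M2.1ᶜ).Infinite) (h : MIso M1 M2 φ) {a1 a2 : Ω} (ha1 : a1 ∈ N1.1 \ M1.1)
    (ha2 : a2 ∈ N2.1 \ M2.1) :
    ∃ P1 P2 ψ, K.le P1 N1 ∧ K.le P2 N2 ∧ P1.1 = aecCl K N1 (M1.1 ∪ {a1}) ∧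
      P2.1 = aecCl K N2 (M2.1 ∪ {a2}) ∧ MIso P1 P2 ψ ∧ EqOn ψ φ M1.1 ∧ ψ a1 = a2 := by
  obtain ⟨N, F, f1, f2, f3, -⟩ := transport K h h1 hc1 hT disjoint_compl_right
  have hFa : F a1 ∈ N.1 \ M2.1 := by
    refine ⟨by rw [← f1.image]; exact ⟨a1, ha1.1, rfl⟩, ?_⟩
    rw [← h.image]
    rintro ⟨x, hx, hxe⟩
    rw [← f2 hx] at hxe
    have := f1.injOn (le_sub K h1 hx) ha1.1 hxe
    exact ha1.2 (this ▸ hx)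
  obtain ⟨P, P2, p1, p2, p3, p4, g, g1, g2⟩ := hG M2 N N2 f3 h2
    (Cardinal.le_aleph0_iff_set_countable.2 (f1.ctble hc1))
    (Cardinal.le_aleph0_iff_set_countable.2 hc2) (F a1) a2 hFa ha2
  classical
  let G : Ω → Ω := fun x => if hx : x ∈ P.1 then (g ⟨x, hx⟩ : Ω) else x
  have hGi : MIso P P2 G := ⟨g, fun x => by simp [G]⟩
  have hG1 : ∀ x ∈ M2.1, G x = x := by
    intro x hx
    have : x ∈ P.1 := by rw [p3]; exact cl_ext K _ _ (Or.inl hx)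
    simp only [G, dif_pos this]
    exact g1 _ hx
  have hG2 : G (F a1) = a2 := by
    have : F a1 ∈ P.1 := by rw [p3]; exact cl_ext K _ _ (Or.inr rfl)
    simp only [G, dif_pos this]
    exact g2 _ rfl
  obtain ⟨F', q1, q2, q3⟩ := f1.symm
  obtain ⟨P1, r1, r2⟩ := q1.restrict K p1
  obtain ⟨F'', s1, s2, s3⟩ := r2.symm
  have hs : MIso P1 P F := by
    refine s1.congr ?_
    intro x hx
    rw [← r2.image] at hx
    obtain ⟨y, hy, rfl⟩ := hx
    rw [s2 y hy, q3 y (le_sub K p1 hy)]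
  refine ⟨P1, P2, G ∘ F, r1, p2, ?_, p4, hs.trans hGi, ?_, hG2⟩
  · have hsub : F '' (M1.1 ∪ {a1}) = M2.1 ∪ {F a1} := by
      rw [image_union, image_singleton, f2.image_eq, h.image]
    have hss : M1.1 ∪ {a1} ⊆ N1.1 :=
      union_subset (le_sub K h1) (singleton_subset_iff.2 ha1.1)
    have := cl_image K f1 (K.le_mem_right h1) hss
    rw [hsub, ← p3, ← hs.image] at this
    exact ((f1.injOn.image_eq_image_iff (cl_sub K (K.le_mem_right h1) hss) (le_sub K r1)).1 this).symm
  · intro x hx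
    simp only [Function.comp]
    rw [f2 hx, hG1]
    rw [← h.image]; exact ⟨x, hx, rfl⟩

/-- isomorphism between unions of chains -/
theorem chain_iso (K : AECStr L Ω) (P Q : ℕ → ModelOn L Ω) (φ : ℕ → Ω → Ω)
    {M N : ModelOn L Ω} (hP : ∀ n, K.le (P n) M) (hQ : ∀ n, K.le (Q n) N)
    (hM : M.1 = ⋃ n, (P n).1) (hN : N.1 = ⋃ n, (Q n).1)
    (hPm : ∀ n, (P n).1 ⊆ (P (n+1)).1)
    (hi : ∀ n, MIso (P n) (Q n) (φ n)) (hc : ∀ n, EqOn (φ (n+1)) (φ n) (P n).1) :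
    ∃ ψ, MIso M N ψ := by
  classical
  have hmono : Monotone (fun n => (P n).1) := monotone_nat_of_le_succ hPm
  have hc' : ∀ n m, n ≤ m → EqOn (φ m) (φ n) (P n).1 := by
    intro n m hnm
    induction m, hnm using Nat.le_induction with
    | base => exact fun _ _ => rfl
    | succ m hm ih => exact fun x hx => (hc m (hmono hm hx)).trans (ih hx)
  have hex : ∀ x ∈ M.1, ∃ n, x ∈ (P n).1 := by
    intro x hx; rw [hM] at hx; exact mem_iUnion.1 hx
  let ψ : Ω → Ω := fun x => if hx : x ∈ M.1 then φ (Nat.find (hex x hx)) x else x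
  have hψ : ∀ n, EqOn ψ (φ n) (P n).1 := by
    intro n x hx
    have hxM : x ∈ M.1 := le_sub K (hP n) hx
    simp only [ψ, dif_pos hxM]
    exact (hc' _ n (Nat.find_min' _ hx) (Nat.find_spec (hex x hxM))).symm
  have hi' : ∀ n, MIso (P n) (Q n) ψ := fun n => (hi n).congr (hψ n).symm
  have hinj : InjOn ψ M.1 := by
    intro x hx y hy hxy
    obtain ⟨n, hn⟩ := hex x hx
    obtain ⟨m, hm⟩ := hex y hy
    exact (hi' (max n m)).injOn (hmono (le_max_left _ _) hn) (hmono (le_max_right _ _) hm) hxy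
  have himg : ψ '' M.1 = N.1 := by
    rw [hM, hN, image_iUnion]
    exact iUnion_congr fun n => (hi' n).image
  have hbij : BijOn ψ M.1 N.1 := ⟨fun x hx => himg ▸ ⟨x, hx, rfl⟩, hinj, himg.ge⟩
  let e : M.1 ≃ N.1 := hbij.equiv ψ
  have he : ∀ x, (e x : Ω) = ψ x := fun x => rfl
  have hlift : ∀ {k : ℕ} (x : Fin k → M.1), ∃ n, ∀ i, (x i : Ω) ∈ (P n).1 := by
    intro k x
    choose f hf using fun i => hex (x i) (x i).2
    refine ⟨Finset.univ.sup f, fun i => hmono (Finset.le_sup (Finset.mem_univ i)) (hf i)⟩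
  refine ⟨ψ, ⟨⟨e, ?_, ?_⟩, he⟩⟩
  · intro k f x
    obtain ⟨n, hn⟩ := hlift x
    obtain ⟨_, j, hj⟩ := K.le_isSub (hP n)
    obtain ⟨_, j', hj'⟩ := K.le_isSub (hQ n)
    obtain ⟨g, hg⟩ := hi' n
    let y : Fin k → (P n).1 := fun i => ⟨x i, hn i⟩
    have hy : x = j ∘ y := funext fun i => Subtype.ext (hj (y i)).symm
    have hcomp : ∀ z, e (j z) = j' (g z) := fun z => Subtype.ext (by rw [he, hj, hj', hg])
    change e _ = _
    have h2 : (e.toFun ∘ x) = j' ∘ (g ∘ y) := by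
      rw [hy]; funext i; exact hcomp _
    rw [h2, hy, ← j.map_fun, ← j'.map_fun, hcomp, g.map_fun]
  · intro k r x
    obtain ⟨n, hn⟩ := hlift x
    obtain ⟨_, j, hj⟩ := K.le_isSub (hP n)
    obtain ⟨_, j', hj'⟩ := K.le_isSub (hQ n)
    obtain ⟨g, hg⟩ := hi' n
    let y : Fin k → (P n).1 := fun i => ⟨x i, hn i⟩
    have hy : x = j ∘ y := funext fun i => Subtype.ext (hj (y i)).symm
    have hcomp : ∀ z, e (j z) = j' (g z) := fun z => Subtype.ext (by rw [he, hj, hj', hg])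
    have h2 : (e.toFun ∘ x) = j' ∘ (g ∘ y) := by
      rw [hy]; funext i; exact hcomp _
    rw [h2, hy, j.map_rel, j'.map_rel, g.map_rel]

theorem cl_image2 (K : AECStr L Ω) {N P Q : ModelOn L Ω} {ψ : Ω → Ω} (hadm : AdmitsInter K N)
    (hP : K.le P N) (hQ : K.le Q N) (h : MIso P Q ψ) {A : Set Ω} (hA : A ⊆ P.1) :
    ψ '' aecCl K N A = aecCl K N (ψ '' A) := by
  have hA' : ψ '' A ⊆ Q.1 := by rw [← h.image]; exact image_mono hA
  rw [← cl_restrict K hP hA (hadm A (hA.trans (le_sub K hP))),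
    ← cl_restrict K hQ hA' (hadm _ (hA'.trans (le_sub K hQ)))]
  exact cl_image K h (K.le_mem_left hP) hA

theorem H1 (K : AECStr L Ω) (hG : GenericUnique K) {M N : ModelOn L Ω}
    (hM : K.le M N) (hc : N.1.Countable) (hinf : (N.1ᶜ).Infinite)
    {x y : Ω} (hx : x ∈ N.1 \ M.1) (hy : y ∈ N.1 \ M.1) :
    ∃ P Q ψ, K.le P N ∧ K.le Q N ∧ P.1 = aecCl K N (M.1 ∪ {x}) ∧
      Q.1 = aecCl K N (M.1 ∪ {y}) ∧ MIso P Q ψ ∧ EqOn ψ id M.1 ∧ ψ x = y :=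
  generic K hG hM hM hc hc (hinf.mono (compl_subset_compl.2 (le_sub K hM))) (MIso.refl M) hx hy

theorem C_img (K : AECStr L Ω) {M N P Q : ModelOn L Ω} {ψ : Ω → Ω} (hadm : AdmitsInter K N)
    (hP : K.le P N) (hQ : K.le Q N) (h : MIso P Q ψ) (hM : M.1 ⊆ P.1) (he : EqOn ψ id M.1)
    {z : Ω} (hz : z ∈ P.1) :
    ψ '' aecCl K N (M.1 ∪ {z}) = aecCl K N (M.1 ∪ {ψ z}) := by
  rw [cl_image2 K hadm hP hQ h (union_subset hM (singleton_subset_iff.2 hz)), image_union,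
    image_singleton, he.image_eq, image_id]

theorem C_two (K : AECStr L Ω) {M N P : ModelOn L Ω} {x y : Ω}
    (hP : P.1 = aecCl K N (M.1 ∪ {x})) (hxy : x ∈ aecCl K N (M.1 ∪ {y})) :
    aecCl K N (P.1 ∪ {y}) = aecCl K N (M.1 ∪ {y}) := by
  apply Subset.antisymm
  · apply cl_min
    apply union_subset
    · rw [hP]
      exact cl_min K N (union_subset (subset_union_left.trans (cl_ext K N _))
        (singleton_subset_iff.2 hxy))
    · exact subset_union_right.trans (cl_ext K N _)
  · apply cl_mono
    apply union_subset_union_left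
    rw [hP]; exact subset_union_left.trans (cl_ext K N _)

theorem H2 (K : AECStr L Ω) (hG : GenericUnique K) {M N : ModelOn L Ω} (hadm : AdmitsInter K N)
    (hM : K.le M N) (hc : N.1.Countable) (hinf : (N.1ᶜ).Infinite)
    {x y d e : Ω} (hx : x ∈ N.1 \ M.1) (hy : y ∈ N.1 \ M.1) (hd : d ∈ N.1 \ M.1)
    (he : e ∈ N.1 \ M.1) (hxy : x ∈ aecCl K N (M.1 ∪ {y})) (hyx : y ∉ aecCl K N (M.1 ∪ {x}))
    (hed : e ∉ aecCl K N (M.1 ∪ {d})) :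
    ∃ P Q ψ, K.le P N ∧ K.le Q N ∧ P.1 = aecCl K N (M.1 ∪ {y}) ∧
      Q.1 = aecCl K N (M.1 ∪ {e}) ∧ MIso P Q ψ ∧ EqOn ψ id M.1 ∧ ψ x = d ∧ ψ y = e := by
  obtain ⟨P, Q, φ, p1, p2, p3, p4, p5, p6, p7⟩ := H1 K hG hM hc hinf hx hd
  obtain ⟨P', Q', ψ, q1, q2, q3, q4, q5, q6, q7⟩ := generic K hG p1 p2 hc hc
    (hinf.mono (compl_subset_compl.2 (le_sub K p2))) p5 (a1 := y) (a2 := e)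
    ⟨hy.1, by rwa [p3]⟩ ⟨he.1, by rwa [p4]⟩
  rw [C_two K p3 hxy] at q3
  have hMP : M.1 ⊆ P.1 := by rw [p3]; exact subset_union_left.trans (cl_ext K N _)
  have hxP : x ∈ P.1 := by rw [p3]; exact cl_ext K N _ (Or.inr rfl)
  have hMP' : M.1 ⊆ P'.1 := by rw [q3]; exact subset_union_left.trans (cl_ext K N _)
  have hyP' : y ∈ P'.1 := by rw [q3]; exact cl_ext K N _ (Or.inr rfl)
  have hid : EqOn ψ id M.1 := fun z hz => (q6 (hMP hz)).trans (p6 hz)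
  refine ⟨P', Q', ψ, q1, q2, q3, ?_, q5, hid, (q6 hxP).trans p7, q7⟩
  rw [← q5.image, q3, C_img K hadm q1 q2 q5 hMP' hid hyP', q7]

theorem exists_Q (K : AECStr L Ω) (hG : GenericUnique K) {M N : ModelOn L Ω}
    (hadm : AdmitsInter K N)
    (hM : K.le M N) (hc : N.1.Countable) (hinf : (N.1ᶜ).Infinite)
    {a b : Ω} (ha : a ∈ N.1 \ M.1) (hb : b ∈ N.1 \ M.1)
    (hab : a ∈ aecCl K N (M.1 ∪ {b})) (hba : b ∉ aecCl K N (M.1 ∪ {a})) :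
    ∃ x : ℚ → Ω, (∀ q, x q ∈ N.1 \ M.1) ∧
      (∀ q q', q < q' → x q ∈ aecCl K N (M.1 ∪ {x q'}) ∧ x q' ∉ aecCl K N (M.1 ∪ {x q})) ∧
      ∀ e ∈ N.1 \ M.1, ∀ q, e ∈ aecCl K N (M.1 ∪ {x q}) → x q ∉ aecCl K N (M.1 ∪ {e}) →
        ∃ q' < q, e ∈ aecCl K N (M.1 ∪ {x q'}) := by
  classical
  have hN := K.le_mem_right hM
  have hself : ∀ z, z ∈ aecCl K N (M.1 ∪ {z}) := fun z => cl_ext K N _ (Or.inr rfl)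
  have hMC : ∀ z, M.1 ⊆ aecCl K N (M.1 ∪ {z}) := fun z =>
    subset_union_left.trans (cl_ext K N _)
  have htr : ∀ {x y : Ω}, x ∈ aecCl K N (M.1 ∪ {y}) →
      aecCl K N (M.1 ∪ {x}) ⊆ aecCl K N (M.1 ∪ {y}) := fun {x y} h =>
    cl_min K N (union_subset (hMC y) (singleton_subset_iff.2 h))
  -- total
  have htot : ∀ d ∈ N.1 \ M.1, ∀ e ∈ N.1 \ M.1, e ∉ aecCl K N (M.1 ∪ {d}) →
      d ∈ aecCl K N (M.1 ∪ {e}) := by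
    intro d hd e he hed
    obtain ⟨P, Q, ψ, p1, p2, p3, p4, p5, p6, p7, p8⟩ :=
      H2 K hG hadm hM hc hinf ha hb hd he hab hba hed
    rw [← p4, ← p5.image, ← p7]
    exact ⟨a, by rw [p3]; exact hab, rfl⟩
  -- transfer of strict relations
  have himg : ∀ {P Q : ModelOn L Ω} {ψ : Ω → Ω}, K.le P N → K.le Q N → MIso P Q ψ → M.1 ⊆ P.1 →
      EqOn ψ id M.1 → ∀ z ∈ P.1, z ∉ M.1 → ψ z ∈ N.1 \ M.1 := by
    intro P Q ψ hP hQ hi hMP hid z hz hzM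
    refine ⟨le_sub K hQ (by rw [← hi.image]; exact ⟨z, hz, rfl⟩), fun h => hzM ?_⟩
    have : ψ (ψ z) = ψ z := hid h
    rw [hi.injOn (hMP h) hz this] at h
    exact h
  have hnot : ∀ {P Q : ModelOn L Ω} {ψ : Ω → Ω}, K.le P N → K.le Q N → MIso P Q ψ → M.1 ⊆ P.1 →
      EqOn ψ id M.1 → ∀ z ∈ P.1, ∀ w ∈ P.1, w ∉ aecCl K N (M.1 ∪ {z}) →
      ψ w ∉ aecCl K N (M.1 ∪ {ψ z}) := by
    intro P Q ψ hP hQ hi hMP hid z hz w hw hwz h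
    rw [← C_img K hadm hP hQ hi hMP hid hz] at h
    obtain ⟨v, hv, hvw⟩ := h
    have hvP : v ∈ P.1 := cl_le K hP (union_subset hMP (singleton_subset_iff.2 hz)) hv
    exact hwz (hi.injOn hvP hw hvw ▸ hv)
  -- below
  have hbelow : ∀ y ∈ N.1 \ M.1, ∃ z ∈ N.1 \ M.1, z ∈ aecCl K N (M.1 ∪ {y}) ∧
      y ∉ aecCl K N (M.1 ∪ {z}) := by
    intro y hy
    obtain ⟨P, Q, ψ, p1, p2, p3, p4, p5, p6, p7⟩ := H1 K hG hM hc hinf hb hy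
    have hMP : M.1 ⊆ P.1 := by rw [p3]; exact hMC b
    have haP : a ∈ P.1 := by rw [p3]; exact hab
    have hbP : b ∈ P.1 := by rw [p3]; exact hself b
    refine ⟨ψ a, himg p1 p2 p5 hMP p6 a haP ha.2, ?_, ?_⟩
    · rw [← p4, ← p5.image]; exact ⟨a, haP, rfl⟩
    · have := hnot p1 p2 p5 hMP p6 a haP b hbP hba
      rwa [p7] at this
  -- dense
  obtain ⟨a', ha', haa, haa'⟩ := hbelow a ha
  have hdense : ∀ d ∈ N.1 \ M.1, ∀ e ∈ N.1 \ M.1, e ∉ aecCl K N (M.1 ∪ {d}) →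
      ∃ z ∈ N.1 \ M.1, z ∉ aecCl K N (M.1 ∪ {d}) ∧ e ∉ aecCl K N (M.1 ∪ {z}) := by
    intro d hd e he hed
    obtain ⟨P, Q, ψ, p1, p2, p3, p4, p5, p6, p7, p8⟩ :=
      H2 K hG hadm hM hc hinf ha' hb hd he (htr hab haa) (fun h => hba (htr haa h)) hed
    have hMP : M.1 ⊆ P.1 := by rw [p3]; exact hMC b
    have haP : a ∈ P.1 := by rw [p3]; exact hab
    have ha'P : a' ∈ P.1 := by rw [p3]; exact htr hab haa
    have hbP : b ∈ P.1 := by rw [p3]; exact hself b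
    refine ⟨ψ a, himg p1 p2 p5 hMP p6 a haP ha.2, ?_, ?_⟩
    · have := hnot p1 p2 p5 hMP p6 a' ha'P a haP haa'
      rwa [p7] at this
    · have := hnot p1 p2 p5 hMP p6 a haP b hbP hba
      rwa [p8] at this
  -- order
  let X : Type u := {x : Ω // x ∈ N.1 \ M.1}
  letI : Preorder X :=
    { le := fun x y => x.1 ∈ aecCl K N (M.1 ∪ {y.1})
      le_refl := fun x => hself x.1
      le_trans := fun x y z h1 h2 => htr h2 h1 }
  have hle : ∀ x y : X, x ≤ y ↔ x.1 ∈ aecCl K N (M.1 ∪ {y.1}) := fun _ _ => Iff.rfl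
  haveI : Std.Total (α := X) (· ≤ ·) := ⟨fun x y => by
    rw [hle, hle]
    by_contra! h
    exact h.2 (htot x.1 x.2 y.1 y.2 h.2 |> fun h' => absurd h' h.1)⟩
  have hlt : ∀ x y : X, x < y ↔ y.1 ∉ aecCl K N (M.1 ∪ {x.1}) := by
    intro x y
    rw [lt_iff_le_not_ge, hle, hle]
    exact ⟨fun h => h.2, fun h => ⟨htot x.1 x.2 y.1 y.2 h, h⟩⟩
  haveI : Countable X := (hc.mono sdiff_subset).to_subtype
  let Y := Antisymmetrization X (· ≤ ·)
  letI : LinearOrder Y := by infer_instance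
  let t : X → Y := toAntisymmetrization (· ≤ ·)
  have ht : ∀ x y : X, t x < t y ↔ x < y := fun x y =>
    toAntisymmetrization_lt_toAntisymmetrization_iff
  have ht' : ∀ x y : X, t x ≤ t y ↔ x ≤ y := fun x y =>
    toAntisymmetrization_le_toAntisymmetrization_iff
  have hts : ∀ y : Y, ∃ x : X, t x = y := fun y => Quotient.exists_rep y
  haveI : Countable Y := Function.Surjective.countable (f := t) hts
  haveI : DenselyOrdered Y := ⟨by
    intro y1 y2 h
    obtain ⟨x1, rfl⟩ := hts y1
    obtain ⟨x2, rfl⟩ := hts y2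
    rw [ht, hlt] at h
    obtain ⟨z, hz, h1, h2⟩ := hdense x1.1 x1.2 x2.1 x2.2 h
    exact ⟨t ⟨z, hz⟩, (ht _ _).2 ((hlt _ _).2 h1), (ht _ _).2 ((hlt _ _).2 h2)⟩⟩
  haveI : NoMinOrder Y := ⟨by
    intro y
    obtain ⟨x, rfl⟩ := hts y
    obtain ⟨z, hz, h1, h2⟩ := hbelow x.1 x.2
    exact ⟨t ⟨z, hz⟩, (ht _ _).2 ((hlt _ _).2 h2)⟩⟩
  let B : Y := t ⟨b, hb⟩
  haveI : Nonempty (Set.Iio B) := ⟨⟨t ⟨a, ha⟩, (ht _ _).2 ((hlt _ _).2 hba)⟩⟩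
  obtain ⟨f⟩ := Order.iso_of_countable_dense ℚ (Set.Iio B)
  choose x hx using fun q => hts (f q).1
  refine ⟨fun q => (x q).1, fun q => (x q).2, ?_, ?_⟩
  · intro q q' hq
    have h1 : (f q).1 < (f q').1 := f.strictMono hq
    rw [← hx, ← hx, ht, lt_iff_le_not_ge] at h1
    exact h1
  · intro e he q h1 h2
    have h3 : t ⟨e, he⟩ < t (x q) := (ht _ _).2 ((hlt _ _).2 h2)
    have h4 : t ⟨e, he⟩ < B := h3.trans (by rw [hx]; exact (f q).2)
    obtain ⟨q', hq'⟩ := f.surjective ⟨t ⟨e, he⟩, h4⟩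
    have h5 : t (x q') = t ⟨e, he⟩ := by rw [hx, hq']
    refine ⟨q', ?_, ?_⟩
    · rw [← f.lt_iff_lt]
      change (f q').1 < (f q).1
      rw [← hx, ← hx, h5]; exact h3
    · exact (ht' ⟨e, he⟩ (x q')).1 h5.ge

theorem no_fail (K : AECStr L Ω) (hG : GenericUnique K) {M N : ModelOn L Ω}
    (hadm : AdmitsInter K N)
    (hM : K.le M N) (hc : N.1.Countable) (hinf : (N.1ᶜ).Infinite)
    {a b : Ω} (ha : a ∈ N.1 \ M.1) (hb : b ∈ N.1 \ M.1)
    (hab : a ∈ aecCl K N (M.1 ∪ {b})) (hba : b ∉ aecCl K N (M.1 ∪ {a})) : False := by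
  obtain ⟨x, hx, hlt, hcof⟩ := exists_Q K hG hadm hM hc hinf ha hb hab hba
  have hN := K.le_mem_right hM
  have hself : ∀ z, z ∈ aecCl K N (M.1 ∪ {z}) := fun z => cl_ext K N _ (Or.inr rfl)
  have hMC : ∀ z, M.1 ⊆ aecCl K N (M.1 ∪ {z}) := fun z =>
    subset_union_left.trans (cl_ext K N _)
  have htr : ∀ {x y : Ω}, x ∈ aecCl K N (M.1 ∪ {y}) →
      aecCl K N (M.1 ∪ {x}) ⊆ aecCl K N (M.1 ∪ {y}) := fun {x y} h =>
    cl_min K N (union_subset (hMC y) (singleton_subset_iff.2 h))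
  choose P hP hPe using fun q => hadm (M.1 ∪ {x q})
    (union_subset (le_sub K hM) (singleton_subset_iff.2 (hx q).1))
  have hPm : ∀ q q', q ≤ q' → (P q).1 ⊆ (P q').1 := by
    intro q q' h
    rcases h.eq_or_lt with rfl | h
    · exact subset_rfl
    · rw [hPe, hPe]; exact htr (hlt q q' h).1
  have hPn : ∀ q q', q < q' → x q' ∉ (P q).1 := by
    intro q q' h; rw [hPe]; exact (hlt q q' h).2
  -- cuts
  have hcut : ∀ r : ℝ, ∃ (u : ℕ → ℚ) (I : ModelOn L Ω), StrictMono u ∧ (∀ n, (u n : ℝ) < r) ∧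
      (∀ q : ℚ, (q : ℝ) < r → ∃ n, q < u n) ∧ K.le I N ∧ I.1 = ⋃ n, (P (u n)).1 ∧
      ∀ n, K.le (P (u n)) I := by
    intro r
    obtain ⟨u, h1, h2, h3⟩ := Real.exists_seq_rat_strictMono_tendsto r
    obtain ⟨I, i1, i2, i3⟩ := K.chain_union (ι := ULift.{u} ℕ) (fun n => P (u n.down)) ⟨⟨0⟩⟩ (by
      rintro ⟨i⟩ ⟨j⟩
      exact ⟨⟨max i j⟩, K.coherence (hP _) (hP _) (hPm _ _ (h1.monotone (le_max_left _ _))),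
        K.coherence (hP _) (hP _) (hPm _ _ (h1.monotone (le_max_right _ _)))⟩)
    refine ⟨u, I, h1, h2, ?_, i3 N fun _ => hP _, ?_, fun n => i2 ⟨n⟩⟩
    · intro q hq
      obtain ⟨n, hn⟩ := (h3.eventually (lt_mem_nhds hq)).exists
      exact ⟨n, by exact_mod_cast hn⟩
    · rw [i1]
      ext z
      simp only [mem_iUnion, ULift.exists]
  obtain ⟨u, I, u1, u2, u3, u4, u5, u6⟩ := hcut 0
  obtain ⟨v, J, v1, v2, v3, v4, v5, v6⟩ := hcut (Real.sqrt 2)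
  -- iso I J
  have hcP : ∀ q q', q < q' → aecCl K N ((P q).1 ∪ {x q'}) = (P q').1 := by
    intro q q' h
    rw [C_two K (hPe q) (hlt q q' h).1, hPe]
  have hco : ∀ {Q : ModelOn L Ω}, K.le Q N → (Q.1ᶜ).Infinite := fun h =>
    hinf.mono (compl_subset_compl.2 (le_sub K h))
  have hstep : ∀ n φ, MIso (P (u n)) (P (v n)) φ →
      ∃ ψ, MIso (P (u (n+1))) (P (v (n+1))) ψ ∧ EqOn ψ φ (P (u n)).1 := by
    intro n φ hφ
    have hu := u1 (Nat.lt_succ_self n)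
    have hv := v1 (Nat.lt_succ_self n)
    obtain ⟨Q1, Q2, ψ, q1, q2, q3, q4, q5, q6, q7⟩ := generic K hG (hP (u n)) (hP (v n)) hc hc
      (hco (hP _)) hφ (a1 := x (u (n+1))) (a2 := x (v (n+1)))
      ⟨(hx _).1, hPn _ _ hu⟩ ⟨(hx _).1, hPn _ _ hv⟩
    rw [hcP _ _ hu] at q3
    rw [hcP _ _ hv] at q4
    rw [le_eq K q1 (hP _) q3, le_eq K q2 (hP _) q4] at q5
    exact ⟨ψ, q5, q6⟩
  have hzero : ∃ φ, MIso (P (u 0)) (P (v 0)) φ := by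
    obtain ⟨Q1, Q2, ψ, q1, q2, q3, q4, q5, q6, q7⟩ := H1 K hG hM hc hinf (hx (u 0)) (hx (v 0))
    rw [← hPe] at q3 q4
    rw [le_eq K q1 (hP _) q3, le_eq K q2 (hP _) q4] at q5
    exact ⟨ψ, q5⟩
  choose S hS1 hS2 using hstep
  let Φ : ∀ n, {φ : Ω → Ω // MIso (P (u n)) (P (v n)) φ} := fun n =>
    Nat.rec ⟨hzero.choose, hzero.choose_spec⟩ (fun n φ => ⟨S n φ.1 φ.2, hS1 n φ.1 φ.2⟩) n
  obtain ⟨φ, hφ⟩ := chain_iso K (fun n => P (u n)) (fun n => P (v n)) (fun n => (Φ n).1)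
    u6 v6 u5 v5 (fun n => hPm _ _ (u1.monotone (Nat.le_succ n))) (fun n => (Φ n).2)
    (fun n => hS2 n (Φ n).1 (Φ n).2)
  -- closures over cuts
  have hcl : ∀ (w : ℕ → ℚ) (Z : ModelOn L Ω) (z : Ω), Z.1 = ⋃ n, (P (w n)).1 →
      (∀ n, x (w n) ∈ aecCl K N (M.1 ∪ {z})) →
      aecCl K N (Z.1 ∪ {z}) = aecCl K N (M.1 ∪ {z}) := by
    intro w Z z hZ hz
    apply Subset.antisymm
    · apply cl_min
      apply union_subset
      · rw [hZ]
        refine iUnion_subset fun n => ?_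
        rw [hPe]; exact htr (hz n)
      · exact singleton_subset_iff.2 (hself z)
    · apply cl_mono
      apply union_subset_union_left
      rw [hZ]
      exact (hMC _).trans ((hPe (w 0)).symm.subset.trans (subset_iUnion (fun n => (P (w n)).1) 0))
  have hs1 : (1.5 : ℝ) > Real.sqrt 2 := by
    rw [gt_iff_lt, Real.sqrt_lt' (by norm_num)]; norm_num
  have hvq : ∀ n, ∀ q : ℚ, (3/2 : ℚ) ≤ q → v n < q := by
    intro n q hq
    have h1 := v2 n
    have h2 : ((3/2 : ℚ) : ℝ) ≤ q := by exact_mod_cast hq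
    have : (v n : ℝ) < q := by push_cast at h2; linarith
    exact_mod_cast this
  have hu0 : ∀ n, u n < 0 := fun n => by exact_mod_cast u2 n
  have hxI : x 0 ∉ I.1 := by
    rw [u5, mem_iUnion]
    rintro ⟨n, hn⟩
    exact hPn _ _ (hu0 n) hn
  have hxJ : ∀ q : ℚ, (3/2 : ℚ) ≤ q → x q ∉ J.1 := by
    intro q hq
    rw [v5, mem_iUnion]
    rintro ⟨n, hn⟩
    exact hPn _ _ (hvq n q hq) hn
  obtain ⟨Q1, Q2, ψ, q1, q2, q3, q4, q5, q6, q7⟩ := generic K hG u4 v4 hc hc (hco v4) hφ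
    (a1 := x 0) (a2 := x 2) ⟨(hx _).1, hxI⟩ ⟨(hx _).1, hxJ 2 (by norm_num)⟩
  have hIQ : I.1 ⊆ Q1.1 := by rw [q3]; exact subset_union_left.trans (cl_ext K N _)
  have h0Q : x 0 ∈ Q1.1 := by rw [q3]; exact cl_ext K N _ (Or.inr rfl)
  rw [hcl u I (x 0) u5 (fun n => (hlt _ _ (hu0 n)).1)] at q3
  rw [hcl v J (x 2) v5 (fun n => (hlt _ _ (hvq n 2 (by norm_num))).1)] at q4
  have h32 : x (3/2) ∈ Q2.1 := by rw [q4]; exact (hlt _ _ (by norm_num)).1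
  rw [← q5.image] at h32
  obtain ⟨e, heQ, he⟩ := h32
  have heI : e ∉ I.1 := by
    intro h
    apply hxJ (3/2) le_rfl
    rw [← he, ← hφ.image, q6 h]
    exact ⟨e, h, rfl⟩
  have heM : e ∉ M.1 := by
    intro h
    apply heI
    rw [u5, mem_iUnion]
    exact ⟨0, by rw [hPe]; exact hMC _ h⟩
  have heN : e ∈ N.1 \ M.1 := ⟨le_sub K q1 heQ, heM⟩
  have h0e : x 0 ∈ aecCl K N (M.1 ∪ {e}) := by
    by_contra hcon
    obtain ⟨q', hq', hh⟩ := hcof e heN 0 (by rw [← q3]; exact heQ) hcon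
    obtain ⟨n, hn⟩ := u3 q' (by exact_mod_cast hq')
    apply heI
    rw [u5, mem_iUnion]
    exact ⟨n, hPm _ _ hn.le (by rw [hPe]; exact hh)⟩
  have h1 : x 0 ∈ aecCl K N (I.1 ∪ {e}) := by
    refine cl_mono K N (union_subset_union_left _ ?_) h0e
    rw [u5]
    exact (hMC _).trans ((hPe (u 0)).symm.subset.trans (subset_iUnion (fun n => (P (u n)).1) 0))
  have h2 : ψ (x 0) ∈ ψ '' aecCl K N (I.1 ∪ {e}) := ⟨_, h1, rfl⟩
  rw [cl_image2 K hadm q1 q2 q5 (union_subset hIQ (singleton_subset_iff.2 heQ)), image_union,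
    image_singleton, q6.image_eq, hφ.image, he, q7,
    hcl v J (x (3/2)) v5 (fun n => (hlt _ _ (hvq n (3/2) le_rfl)).1)] at h2
  exact (hlt (3/2) 2 (by norm_num)).2 h2

theorem H1' (K : AECStr L Ω) (hG : GenericUnique K) {M N : ModelOn L Ω}
    (hM : K.le M N) (hc : N.1.Countable)
    {x y : Ω} (hx : x ∈ N.1 \ M.1) (hy : y ∈ N.1 \ M.1) :
    ∃ P Q ψ, K.le P N ∧ K.le Q N ∧ P.1 = aecCl K N (M.1 ∪ {x}) ∧
      Q.1 = aecCl K N (M.1 ∪ {y}) ∧ MIso P Q ψ ∧ EqOn ψ id M.1 ∧ ψ x = y := by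
  classical
  have hc' := Cardinal.le_aleph0_iff_set_countable.2 hc
  obtain ⟨P, P2, p1, p2, p3, p4, g, g1, g2⟩ := hG M N N hM hM hc' hc' x y hx hy
  refine ⟨P, P2, fun x => if hx : x ∈ P.1 then (g ⟨x, hx⟩ : Ω) else x, p1, p2, p3, p4,
    ⟨g, fun x => by simp⟩, ?_, ?_⟩
  · intro x hx
    have : x ∈ P.1 := by rw [p3]; exact cl_ext K _ _ (Or.inl hx)
    simp only [dif_pos this]
    exact g1 _ hx
  · have : x ∈ P.1 := by rw [p3]; exact cl_ext K _ _ (Or.inr rfl)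
    simp only [dif_pos this]
    exact g2 _ rfl

theorem inf_diff (K : AECStr L Ω) (hG : GenericUnique K) {M N : ModelOn L Ω}
    (hadm : AdmitsInter K N) (hM : K.le M N) (hc : N.1.Countable)
    {a b : Ω} (ha : a ∈ N.1 \ M.1) (hb : b ∈ N.1 \ M.1)
    (hab : a ∈ aecCl K N (M.1 ∪ {b})) (hba : b ∉ aecCl K N (M.1 ∪ {a})) :
    (N.1 \ M.1).Infinite := by
  intro hfin
  have hN := K.le_mem_right hM
  obtain ⟨y, hy, hmin⟩ := Set.exists_min_image (N.1 \ M.1)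
    (fun y => (aecCl K N (M.1 ∪ {y}) \ M.1).ncard) hfin ⟨a, ha⟩
  obtain ⟨P, Q, ψ, p1, p2, p3, p4, p5, p6, p7⟩ := H1' K hG hM hc hb hy
  have hMP : M.1 ⊆ P.1 := by rw [p3]; exact subset_union_left.trans (cl_ext K N _)
  have haP : a ∈ P.1 := by rw [p3]; exact hab
  have hbP : b ∈ P.1 := by rw [p3]; exact cl_ext K N _ (Or.inr rfl)
  have hzQ : ψ a ∈ Q.1 := by rw [← p5.image]; exact ⟨a, haP, rfl⟩
  have hz : ψ a ∈ N.1 \ M.1 := by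
    refine ⟨le_sub K p2 hzQ, fun h => ha.2 ?_⟩
    have : ψ (ψ a) = ψ a := p6 h
    rw [p5.injOn (hMP h) haP this] at h
    exact h
  have hyz : y ∉ aecCl K N (M.1 ∪ {ψ a}) := by
    intro h
    rw [← C_img K hadm p1 p2 p5 hMP p6 haP] at h
    obtain ⟨v, hv, hvw⟩ := h
    have hvP : v ∈ P.1 := cl_le K p1 (union_subset hMP (singleton_subset_iff.2 haP)) hv
    rw [← p7] at hvw
    exact hba (p5.injOn hvP hbP hvw ▸ hv)
  have hsub : aecCl K N (M.1 ∪ {ψ a}) ⊆ aecCl K N (M.1 ∪ {y}) :=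
    cl_min K N (union_subset (subset_union_left.trans (cl_ext K N _))
      (singleton_subset_iff.2 (by rw [← p4]; exact hzQ)))
  have hlt : (aecCl K N (M.1 ∪ {ψ a}) \ M.1).ncard < (aecCl K N (M.1 ∪ {y}) \ M.1).ncard := by
    apply Set.ncard_lt_ncard
    · refine ⟨fun z hz => ⟨hsub hz.1, hz.2⟩, fun h => ?_⟩
      exact hyz (h ⟨cl_ext K N _ (Or.inr rfl), hy.2⟩).1
    · refine hfin.subset fun z hz => ⟨cl_sub K hN ?_ hz.1, hz.2⟩
      exact union_subset (le_sub K hM) (singleton_subset_iff.2 hy.1)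
  exact absurd (hmin _ hz) (not_le.2 hlt)

theorem no_fail' (K : AECStr L Ω) (hG : GenericUnique K)
    (hI : ∀ N ∈ K.mem, #N.1 ≤ ℵ₀ → AdmitsInter K N) {M N : ModelOn L Ω}
    (hM : K.le M N) (hc : N.1.Countable)
    {a b : Ω} (ha : a ∈ N.1 \ M.1) (hb : b ∈ N.1 \ M.1)
    (hab : a ∈ aecCl K N (M.1 ∪ {b})) (hba : b ∉ aecCl K N (M.1 ∪ {a})) : False := by
  have hN := K.le_mem_right hM
  have hadm := hI N hN (Cardinal.le_aleph0_iff_set_countable.2 hc)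
  have hinf := inf_diff K hG hadm hM hc ha hb hab hba
  let i : ℕ ↪ ↥(N.1 \ M.1) := hinf.natEmbedding
  let j : ℕ → Ω := fun n => (i n : Ω)
  have hj : Function.Injective j := Subtype.val_injective.comp i.injective
  have hjM : ∀ n, j n ∉ M.1 := fun n => (i n).2.2
  let T : Set Ω := range fun n => j (2 * n)
  have hT : T.Infinite := infinite_range_of_injective (by
    intro n m h
    have := hj h
    omega)
  have hd : Disjoint M.1 T := by
    rw [disjoint_right]
    rintro _ ⟨n, rfl⟩
    exact hjM _
  obtain ⟨N2, F, f1, f2, f3, f4⟩ := transport K (MIso.refl M) hM hc hT hd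
  have hc2 := f1.ctble hc
  have hinf2 : (N2.1ᶜ).Infinite := by
    refine (infinite_range_of_injective (f := fun n => j (2 * n + 1)) (by
      intro n m h
      have := hj h
      omega)).mono ?_
    rintro _ ⟨n, rfl⟩ hn
    rcases f4 hn with h | ⟨m, hm⟩
    · exact hjM _ h
    · have := hj hm
      omega
  have hF : ∀ z ∈ N.1 \ M.1, F z ∈ N2.1 \ M.1 := by
    intro z hz
    refine ⟨by rw [← f1.image]; exact ⟨z, hz.1, rfl⟩, fun h => hz.2 ?_⟩
    have : F (F z) = F z := f2 h
    rw [f1.injOn (le_sub K hM h) hz.1 this] at h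
    exact h
  have hC : ∀ z ∈ N.1, F '' aecCl K N (M.1 ∪ {z}) = aecCl K N2 (M.1 ∪ {F z}) := by
    intro z hz
    rw [cl_image K f1 hN (union_subset (le_sub K hM) (singleton_subset_iff.2 hz)), image_union,
      image_singleton, f2.image_eq, image_id]
  refine no_fail K hG (hI N2 (K.le_mem_right f3) (Cardinal.le_aleph0_iff_set_countable.2 hc2))
    f3 hc2 hinf2 (hF a ha) (hF b hb) ?_ ?_
  · rw [← hC b hb.1]; exact ⟨a, hab, rfl⟩
  · rw [← hC a ha.1]
    rintro ⟨v, hv, hvb⟩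
    have hvN := cl_sub K hN (union_subset (le_sub K hM) (singleton_subset_iff.2 ha.1)) hv
    exact hba (f1.injOn hvN hb.1 hvb ▸ hv)

theorem cl_cl_union (K : AECStr L Ω) {N : ModelOn L Ω} (A : Set Ω) (b : Ω) :
    aecCl K N (aecCl K N A ∪ {b}) = aecCl K N (A ∪ {b}) := by
  apply Subset.antisymm
  · exact cl_min K N (union_subset (cl_mono K N subset_union_left)
      (subset_union_right.trans (cl_ext K N _)))
  · exact cl_mono K N (union_subset_union_left _ (cl_ext K N A))

theorem exchange (K : AECStr L Ω) (hLS : K.LS = ℵ₀) (hG : GenericUnique K)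
    (hI : ∀ N ∈ K.mem, #N.1 ≤ ℵ₀ → AdmitsInter K N) {N : ModelOn L Ω} (hN : N ∈ K.mem)
    {A : Set Ω} (hA : A ⊆ N.1) {a b : Ω} (hb : b ∈ N.1)
    (h1 : a ∈ aecCl K N (A ∪ {b})) (h2 : a ∉ aecCl K N A) : b ∈ aecCl K N (A ∪ {a}) := by
  by_contra h3
  have hAb : A ∪ {b} ⊆ N.1 := union_subset hA (singleton_subset_iff.2 hb)
  obtain ⟨_, -, he, hfin⟩ := cl_all K hLS hI hN hAb
  obtain ⟨A1, s1, s2, s3⟩ := hfin a (by rw [he]; exact h1)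
  let A0 := A1 ∩ A
  have hA0 : A0 ⊆ A := inter_subset_right
  have hA0f : A0.Finite := s2.subset inter_subset_left
  have h1' : a ∈ aecCl K N (A0 ∪ {b}) := cl_mono K N (by
    intro z hz
    rcases s1 hz with h | h
    · exact Or.inl ⟨hz, h⟩
    · exact Or.inr h) s3
  have h2' : a ∉ aecCl K N A0 := fun h => h2 (cl_mono K N hA0 h)
  have h3' : b ∉ aecCl K N (A0 ∪ {a}) := fun h => h3 (cl_mono K N (union_subset_union_left _ hA0) h)
  have hb0 : b ∉ aecCl K N A0 := fun h => h3' (cl_mono K N subset_union_left h)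
  have hA0b : A0 ∪ {b} ⊆ N.1 := (union_subset_union_left _ hA0).trans hAb
  obtain ⟨M, m1, m2, m3⟩ := cl_ctble K hLS hI hN (hA0.trans hA) hA0f.countable
  obtain ⟨B, b1, b2, b3⟩ := cl_ctble K hLS hI hN hA0b (hA0f.union (finite_singleton b)).countable
  have hMB : K.le M B := K.coherence m1 b1 (by
    rw [m2, b2]; exact cl_mono K N subset_union_left)
  have haB : a ∈ B.1 := by rw [b2]; exact h1'
  have hbB : b ∈ B.1 := by rw [b2]; exact cl_ext K N _ (Or.inr rfl)
  have hr : ∀ z ∈ B.1, aecCl K B (M.1 ∪ {z}) = aecCl K N (A0 ∪ {z}) := by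
    intro z hz
    have hs : M.1 ∪ {z} ⊆ B.1 := union_subset (le_sub K hMB) (singleton_subset_iff.2 hz)
    obtain ⟨R, r1, r2, -⟩ := cl_all K hLS hI hN (hs.trans (le_sub K b1))
    rw [cl_restrict K b1 hs ⟨R, r1, r2⟩, m2, cl_cl_union]
  refine no_fail' K hG hI hMB (Cardinal.le_aleph0_iff_set_countable.1 b3) (a := a) (b := b)
    ⟨haB, by rwa [m2]⟩ ⟨hbB, by rwa [m2]⟩ ?_ ?_
  · rw [hr b hbB]; exact h1'
  · rw [hr a haB]; exact h3'

end QM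

/-- In a quasiminimal AEC every model admits intersections, and for every
`N ∈ K` the pair `(|N|, cl^N)` is a pregeometry (a closure space with finite
character and exchange) whose closed sets are exactly the universes of the
`M ≤ₖ N`. -/
theorem stmt17 (K : AECStr L Ω) (hK : IsQuasiminimal K) :
    (∀ N ∈ K.mem, AdmitsInter K N) ∧
    ∀ N ∈ K.mem,
      (∀ A : Set Ω, A ⊆ N.1 → A ⊆ aecCl K N A) ∧
      (∀ A B : Set Ω, A ⊆ N.1 → B ⊆ N.1 →
        A ⊆ aecCl K N B → aecCl K N A ⊆ aecCl K N B) ∧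
      (∀ A : Set Ω, A ⊆ N.1 → ∀ a ∈ aecCl K N A,
        ∃ A₀ : Set Ω, A₀ ⊆ A ∧ A₀.Finite ∧ a ∈ aecCl K N A₀) ∧
      (∀ A : Set Ω, A ⊆ N.1 → ∀ a b : Ω, a ∈ N.1 → b ∈ N.1 →
        a ∈ aecCl K N (A ∪ {b}) → a ∉ aecCl K N A → b ∈ aecCl K N (A ∪ {a})) ∧
      (∀ A : Set Ω, A ⊆ N.1 →
        (aecCl K N A = A ↔ ∃ M : ModelOn L Ω, K.le M N ∧ M.1 = A)) := by
  obtain ⟨hLS, -, hI, hG⟩ := hK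
  have hadm : ∀ N ∈ K.mem, AdmitsInter K N := by
    intro N hN A hA
    obtain ⟨M, h1, h2, -⟩ := QM.cl_all K hLS hI hN hA
    exact ⟨M, h1, h2⟩
  refine ⟨hadm, fun N hN => ⟨fun A _ => QM.cl_ext K N A, fun A B _ _ h => QM.cl_min K N h, ?_, ?_, ?_⟩⟩
  · intro A hA a ha
    obtain ⟨M, h1, h2, h3⟩ := QM.cl_all K hLS hI hN hA
    exact h3 a (by rw [h2]; exact ha)
  · intro A hA a b _ hb h1 h2
    exact QM.exchange K hLS hG hI hN hA hb h1 h2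
  · intro A hA
    constructor
    · intro h
      obtain ⟨M, h1, h2⟩ := hadm N hN A hA
      exact ⟨M, h1, h2.trans h⟩
    · rintro ⟨M, h1, rfl⟩
      exact QM.cl_model K h1
end
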